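/- arXiv:math/0405420 — 5 statements merged into one kernel-verified Lean document; each statement's English description precedes it below -/
import Mathlib

section
/- Let ω ∈ ℝ^r satisfy the Diophantine condition with constants C₀ > 0 and τ₀ ≥ r−1, let 0 < a₁ ≤ ⋯ ≤ a_s be real numbers, let τ₁ ≥ τ₀, let ε > 0 and let 0 < δ ≤ C₀/2. If for some ν ∈ ℤ^r∖{0}, some indices 1 ≤ i ≤ j ≤ s and some η, η' ∈ {−1, 0, +1} one has |ω·ν + η√(ε a_j) + η'√(ε a_i)| < δ |ν|^{−τ₁}, then √(ε a_s) ≥ (C₀/4) |ν|^{−τ₀}; equivalently, |ν| ≥ (C₀ / (4 √(ε a_s)))^{1/τ₀}. -/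
/-!
At a near-resonance `|ω·ν + z| < δ|ν|^{-τ₁}`, at most half of the Diophantine lower bound
`C₀|ν|^{-τ₀}` on `|ω·ν|` can survive in the sum `ω·ν + z`, so the shift `z` has to supply
the other half. A shift `z = ∑ ℓ m * Ω m` by normal frequencies is at most `(∑ |ℓ m|) max |Ω m|`,
which bounds the largest normal frequency from below.
-/

section Resonance

variable {ι κ : Type*} [Fintype ι] [Fintype κ]

/-- The `ℓ¹`-norm `|ν|` of an integer vector, as a real number so that it can be raised to real
powers. -/
def harmonicNorm (ν : ι → ℤ) : ℝ := ∑ k, |(ν k : ℝ)|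

/-- The value `ω·ν` of the frequency vector `ω` on the harmonic `ν`. -/
def harmonicFrequency (ω : ι → ℝ) (ν : ι → ℤ) : ℝ := ∑ k, ω k * (ν k : ℝ)

/-- The Diophantine condition with constants `C` and `τ`: `|ω·ν| ≥ C|ν|^{-τ}` for all nonzero
integer vectors `ν`. Positivity of `C` is not part of the definition. -/
def IsDiophantine (ω : ι → ℝ) (C τ : ℝ) : Prop :=
  ∀ ν : ι → ℤ, ν ≠ 0 → C * harmonicNorm ν ^ (-τ) ≤ |harmonicFrequency ω ν|

lemma one_le_harmonicNorm {ν : ι → ℤ} (hν : ν ≠ 0) : 1 ≤ harmonicNorm ν := by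
  obtain ⟨k, hk⟩ := Function.ne_iff.mp hν
  calc (1 : ℝ) ≤ |(ν k : ℝ)| := mod_cast Int.one_le_abs hk
    _ ≤ harmonicNorm ν :=
      Finset.single_le_sum (f := fun k ↦ |(ν k : ℝ)|) (fun _ _ ↦ abs_nonneg _)
        (Finset.mem_univ k)

lemma abs_sum_mul_le_sum_abs_mul (ℓ : κ → ℝ) {Ω : κ → ℝ} {M : ℝ} (hΩ : ∀ m, |Ω m| ≤ M) :
    |∑ m, ℓ m * Ω m| ≤ (∑ m, |ℓ m|) * M := by
  calc |∑ m, ℓ m * Ω m| ≤ ∑ m, |ℓ m * Ω m| := Finset.abs_sum_le_sum_abs _ _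
    _ ≤ ∑ m, |ℓ m| * M := by
      gcongr with m
      rw [abs_mul]
      gcongr
      exact hΩ m
    _ = (∑ m, |ℓ m|) * M := (Finset.sum_mul ..).symm

lemma rpow_one_div_le_of_mul_rpow_neg_le {c x M τ : ℝ} (hc : 0 ≤ c) (hx : 1 ≤ x) (hM : 0 < M)
    (hτ : 0 ≤ τ) (h : c * x ^ (-τ) ≤ M) : (c / M) ^ (1 / τ) ≤ x := by
  rcases hτ.eq_or_lt with rfl | hτ_pos
  · simpa using hx
  · have hx_pos : 0 < x := one_pos.trans_le hx
    rw [one_div, Real.rpow_inv_le_iff_of_pos (by positivity) hx_pos.le hτ_pos, div_le_comm₀ hM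
      (by positivity)]
    rwa [Real.rpow_neg hx_pos.le, ← div_eq_mul_inv] at h

lemma IsDiophantine.half_mul_rpow_lt_abs_of_abs_add_lt {ω : ι → ℝ} {C τ₀ τ₁ δ z : ℝ}
    {ν : ι → ℤ} (hω : IsDiophantine ω C τ₀) (hC : 0 ≤ C) (hτ : τ₀ ≤ τ₁) (hδ : δ ≤ C / 2)
    (hν : ν ≠ 0)
    (hsmall : |harmonicFrequency ω ν + z| < δ * harmonicNorm ν ^ (-τ₁)) :
    C / 2 * harmonicNorm ν ^ (-τ₀) < |z| := by
  have hN : 1 ≤ harmonicNorm ν := one_le_harmonicNorm hν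
  have hwidth : δ * harmonicNorm ν ^ (-τ₁) ≤ C / 2 * harmonicNorm ν ^ (-τ₀) := by gcongr
  have htriangle : |harmonicFrequency ω ν| ≤ |harmonicFrequency ω ν + z| + |z| := by
    simpa only [add_sub_cancel_right] using abs_sub (harmonicFrequency ω ν + z) z
  linarith [hω ν hν]

theorem resonant_harmonics_are_large_general {ω : ι → ℝ} {C₀ τ₀ τ₁ δ : ℝ} {ν : ι → ℤ}
    {ℓ Ω : κ → ℝ} {L M : ℝ} (hω : IsDiophantine ω C₀ τ₀) (hC₀ : 0 < C₀) (hτ₀ : 0 ≤ τ₀)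
    (hτ₁ : τ₀ ≤ τ₁) (hδ : δ ≤ C₀ / 2) (hν : ν ≠ 0) (hℓ : ∑ m, |ℓ m| ≤ L)
    (hΩ : ∀ m, |Ω m| ≤ M)
    (hsmall : |harmonicFrequency ω ν + ∑ m, ℓ m * Ω m| < δ * harmonicNorm ν ^ (-τ₁)) :
    C₀ / (2 * L) * harmonicNorm ν ^ (-τ₀) < M ∧
      (C₀ / (2 * L * M)) ^ (1 / τ₀) ≤ harmonicNorm ν := by
  have hN : 1 ≤ harmonicNorm ν := one_le_harmonicNorm hν
  have hshift : C₀ / 2 * harmonicNorm ν ^ (-τ₀) < (∑ m, |ℓ m|) * M :=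
    (hω.half_mul_rpow_lt_abs_of_abs_add_lt hC₀.le hτ₁ hδ hν hsmall).trans_le
      (abs_sum_mul_le_sum_abs_mul ℓ hΩ)
  have hℓM : 0 < (∑ m, |ℓ m|) * M := hshift.trans' (by positivity)
  have hM : 0 < M := pos_of_mul_pos_right hℓM (by positivity)
  have hL : 0 < L := (pos_of_mul_pos_left hℓM hM.le).trans_le hℓ
  have hlower : C₀ / (2 * L) * harmonicNorm ν ^ (-τ₀) < M := by
    calc C₀ / (2 * L) * harmonicNorm ν ^ (-τ₀)
        = C₀ / 2 * harmonicNorm ν ^ (-τ₀) / L := by field_simp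
      _ < M := (div_lt_iff₀' hL).mpr (hshift.trans_le (by gcongr))
  refine ⟨hlower, ?_⟩
  rw [← div_div]
  exact rpow_one_div_le_of_mul_rpow_neg_le (by positivity) hN hM hτ₀ hlower.le

end Resonance

lemma sum_abs_pair_le_two_of_signs {η η' : ℝ} (hη : η = -1 ∨ η = 0 ∨ η = 1)
    (hη' : η' = -1 ∨ η' = 0 ∨ η' = 1) : ∑ m, |![η, η'] m| ≤ 2 := by
  rcases hη with rfl | rfl | rfl <;> rcases hη' with rfl | rfl | rfl <;>
    norm_num [Fin.sum_univ_two]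

lemma abs_sqrt_mul_le_sqrt_mul {ε x y : ℝ} (hε : 0 ≤ ε) (hxy : x ≤ y) :
    |√(ε * x)| ≤ √(ε * y) := by
  rw [abs_of_nonneg (Real.sqrt_nonneg _)]
  gcongr

/-- If `ω` is Diophantine with constants `C₀, τ₀`, `0 < a₁ ≤ ⋯ ≤ a_s`, `τ₁ ≥ τ₀`,
`ε > 0`, `0 < δ ≤ C₀/2`, and `|ω·ν + η√(ε a_j) + η'√(ε a_i)| < δ|ν|^{−τ₁}` for some
`ν ≠ 0`, `i ≤ j` and `η, η' ∈ {−1,0,1}`, then `√(ε a_s) ≥ (C₀/4)|ν|^{−τ₀}`;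
equivalently `|ν| ≥ (C₀/(4√(ε a_s)))^{1/τ₀}`. -/
theorem resonant_harmonics_are_large (r s : ℕ) (hr : 1 ≤ r) (hs : 1 ≤ s)
    (ω : Fin r → ℝ) (C₀ τ₀ : ℝ) (hC₀ : 0 < C₀) (hτ₀ : (r : ℝ) - 1 ≤ τ₀)
    (hdio : ∀ ν : Fin r → ℤ, ν ≠ 0 →
      C₀ * (∑ k, |(ν k : ℝ)|) ^ (-τ₀) ≤ |∑ k, ω k * (ν k : ℝ)|)
    (a : Fin s → ℝ) (hpos : ∀ i, 0 < a i) (hmono : Monotone a)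
    (τ₁ : ℝ) (hτ₁ : τ₀ ≤ τ₁)
    (ε : ℝ) (hε : 0 < ε)
    (δ : ℝ) (hδ0 : 0 < δ) (hδ : δ ≤ C₀ / 2)
    (ν : Fin r → ℤ) (hν : ν ≠ 0)
    (i j : Fin s) (hij : i ≤ j)
    (η η' : ℝ) (hη : η = -1 ∨ η = 0 ∨ η = 1) (hη' : η' = -1 ∨ η' = 0 ∨ η' = 1)
    (hsmall : |∑ k, ω k * (ν k : ℝ) + η * Real.sqrt (ε * a j) + η' * Real.sqrt (ε * a i)|
      < δ * (∑ k, |(ν k : ℝ)|) ^ (-τ₁)) :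
    C₀ / 4 * (∑ k, |(ν k : ℝ)|) ^ (-τ₀) ≤ Real.sqrt (ε * a ⟨s - 1, by omega⟩) ∧
    (C₀ / (4 * Real.sqrt (ε * a ⟨s - 1, by omega⟩))) ^ ((1 : ℝ) / τ₀)
      ≤ ∑ k, |(ν k : ℝ)| := by
  have hτ₀_nonneg : 0 ≤ τ₀ := (sub_nonneg.mpr (mod_cast hr)).trans hτ₀
  have hlast (m : Fin s) : a m ≤ a ⟨s - 1, by omega⟩ := hmono (Fin.le_def.mpr (by grind))
  have hbound := resonant_harmonics_are_large_general (Ω := fun m ↦ √(ε * a (![j, i] m)))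
    hdio hC₀ hτ₀_nonneg hτ₁ hδ hν (sum_abs_pair_le_two_of_signs hη hη')
    (fun m ↦ abs_sqrt_mul_le_sqrt_mul hε.le (hlast _))
    (by simpa [harmonicFrequency, harmonicNorm, add_assoc] using hsmall)
  rw [show (2 : ℝ) * 2 = 4 by norm_num] at hbound
  exact hbound.imp_left le_of_lt
end

section
/- Let M₀ be a d×d Hermitian matrix whose distinct eigenvalues are λ₁ < ⋯ < λ_p with multiplicities n₁, …, n_p (so n₁ + ⋯ + n_p = d), and let M₁ be a d×d Hermitian matrix. Then there exist ε₀ > 0, C > 0 and real-analytic functions λ_{j,k} : (−ε₀, ε₀) → ℝ for 1 ≤ j ≤ p and 1 ≤ k ≤ n_j, with λ_{j,k}(0) = λ_j, such that for every ε ∈ (−ε₀, ε₀) the family (λ_{j,k}(ε))_{j,k} is exactly the list of eigenvalues of M₀ + ε M₁ counted with multiplicity, and |λ_{j,k}(ε) − λ_{j,k'}(ε)| ≤ C|ε| for every j and all 1 ≤ k, k' ≤ n_j. -/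
/-!
The characteristic polynomial of a Hermitian matrix has only real roots, so it suffices that the
roots of a monic real polynomial `P t` of degree `n`, with analytic coefficients and only real
roots, can be chosen analytic near any `t₀` (Rellich). This goes by induction on `n`.

Translate the variable so that the roots sum to zero, and let `σ t` be the sum of their squares.
If `σ` vanishes identically, then `P t = X ^ n`. Otherwise `σ`, being nonnegative, vanishes at `t₀`
to an even order `2 * m`, so every root is `O((t - t₀) ^ m)`, and the polynomial `Q t` whose roots
are those of `P t` divided by `(t - t₀) ^ m` again has analytic coefficients. The roots of `Q t₀`
sum to zero while the sum of their squares does not vanish, so they are not all equal and `Q t₀` is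
a product of two coprime factors of smaller degree. By the inverse function theorem this
factorization extends analytically to `Q t` for `t` near `t₀`.
-/

open Filter Topology Polynomial

section LocalInverse

variable {𝕜 E F G : Type*} [NontriviallyNormedField 𝕜] [NormedAddCommGroup E] [NormedSpace 𝕜 E]
  [CompleteSpace E] [NormedAddCommGroup F] [NormedSpace 𝕜 F]

theorem exists_analyticAt_local_right_inverse {f : E → F} {a : E} {f' : E ≃L[𝕜] F}
    (hf : AnalyticAt 𝕜 f a) (hf' : HasFDerivAt f (f' : E →L[𝕜] F) a) :
    ∃ g : F → E, AnalyticAt 𝕜 g (f a) ∧ g (f a) = a ∧ ∀ᶠ y in 𝓝 (f a), f (g y) = y := by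
  have hstrict : HasStrictFDerivAt f (f' : E →L[𝕜] F) a := hf'.fderiv ▸ hf.hasStrictFDerivAt
  exact ⟨hstrict.localInverse f f' a,
    (hstrict.toOpenPartialHomeomorph f).analyticAt_symm'
      hstrict.mem_toOpenPartialHomeomorph_source hf hf'.fderiv,
    hstrict.localInverse_apply_image, hstrict.eventually_right_inverse⟩

theorem exists_analyticAt_right_inverse_linear_add_bilinear [NormedAddCommGroup G]
    [NormedSpace 𝕜 G] [CompleteSpace F] (D : (E × F) ≃L[𝕜] G) (B : E →L[𝕜] F →L[𝕜] G) :
    ∃ g : G → E × F, AnalyticAt 𝕜 g 0 ∧ g 0 = 0 ∧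
      ∀ᶠ y in 𝓝 (0 : G), D (g y) + B (g y).1 (g y).2 = y := by
  have hderiv : HasFDerivAt (fun z : E × F => D z + B z.1 z.2) (D : E × F →L[𝕜] G) 0 :=
    (D.hasFDerivAt.add (B.isBoundedBilinearMap.hasFDerivAt 0)).congr_fderiv <| by ext <;> simp
  have hana : AnalyticAt 𝕜 (fun z : E × F => D z + B z.1 z.2) 0 :=
    ((D : E × F →L[𝕜] G).analyticAt 0).add (B.analyticAt_bilinear 0)
  simpa using exists_analyticAt_local_right_inverse hana hderiv

end LocalInverse

section CoprimeFactors

theorem degree_mul_lt_add {R : Type*} [Semiring R] {p q : R[X]} {m n : ℕ} (hp : p.degree < m)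
    (hq : q.degree ≤ n) : (p * q).degree < (m + n : ℕ) :=
  calc (p * q).degree ≤ p.degree + q.degree := degree_mul_le p q
    _ ≤ p.degree + n := by gcongr
    _ < (m + n : ℕ) := by
      rw [Nat.cast_add]
      exact WithBot.add_lt_add_right (WithBot.natCast_ne_bot n) hp

variable {K : Type*} [Field K]

theorem eq_zero_of_mul_add_mul_eq_zero {u v p q : K[X]} (huv : IsCoprime u v)
    (hp : p.degree < u.degree) (hq : q.degree < v.degree) (h : p * v + u * q = 0) :
    p = 0 ∧ q = 0 := by
  have hup : u ∣ p := huv.dvd_of_dvd_mul_right ⟨-q, by linear_combination h⟩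
  have hvq : v ∣ q := huv.symm.dvd_of_dvd_mul_left ⟨-p, by linear_combination h⟩
  exact ⟨eq_zero_of_dvd_of_degree_lt hup hp, eq_zero_of_dvd_of_degree_lt hvq hq⟩

variable [DecidableEq K]

theorem ofFn_toFn_of_degree_lt {n : ℕ} {p : K[X]} (hp : p.degree < n) :
    ofFn n (toFn n p) = p := by
  rcases eq_or_ne p 0 with rfl | hp₀
  · simp only [map_zero]
  · exact ofFn_comp_toFn_eq_id_of_natDegree_lt ((natDegree_lt_iff_degree_lt hp₀).2 hp)

/-- The differential at `(u, v)` of the multiplication of monic polynomials of degrees `m` and `n`,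
in terms of the coefficients below the leading one. -/
noncomputable def mulDifferential (u v : K[X]) (m n : ℕ) :
    (Fin m → K) × (Fin n → K) →ₗ[K] Fin (m + n) → K :=
  toFn (m + n) ∘ₗ (LinearMap.mulRight K v ∘ₗ ofFn m).coprod (LinearMap.mulLeft K u ∘ₗ ofFn n)

theorem ofFn_mulDifferential {u v : K[X]} {m n : ℕ} (hu : u.degree = m) (hv : v.degree = n)
    (z : (Fin m → K) × (Fin n → K)) :
    ofFn (m + n) (mulDifferential u v m n z) = ofFn m z.1 * v + u * ofFn n z.2 := by
  have hpv : (ofFn m z.1 * v).degree < (m + n : ℕ) := degree_mul_lt_add (ofFn_degree_lt _) hv.le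
  have hqu : (u * ofFn n z.2).degree < (m + n : ℕ) := by
    rw [mul_comm, add_comm]
    exact degree_mul_lt_add (ofFn_degree_lt _) hu.le
  exact ofFn_toFn_of_degree_lt ((degree_add_le _ _).trans_lt (max_lt hpv hqu))

theorem mulDifferential_injective {u v : K[X]} {m n : ℕ} (huv : IsCoprime u v)
    (hu : u.degree = m) (hv : v.degree = n) : Function.Injective (mulDifferential u v m n) := by
  rw [injective_iff_map_eq_zero]
  intro z hz
  have hsum : ofFn m z.1 * v + u * ofFn n z.2 = 0 := by
    rw [← ofFn_mulDifferential hu hv, hz, map_zero]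
  obtain ⟨hx, hy⟩ := eq_zero_of_mul_add_mul_eq_zero huv (hu ▸ ofFn_degree_lt z.1)
    (hv ▸ ofFn_degree_lt z.2) hsum
  exact Prod.ext (injective_ofFn m (hx.trans (map_zero _).symm))
    (injective_ofFn n (hy.trans (map_zero _).symm))

end CoprimeFactors

section Hensel

variable {𝕜 E : Type*} [NontriviallyNormedField 𝕜] [NormedAddCommGroup E] [NormedSpace 𝕜 E]

/-- A family of monic polynomials of degree `n` whose coefficients are analytic at `x₀`. -/
structure IsMonicAnalyticAt (P : E → 𝕜[X]) (n : ℕ) (x₀ : E) : Prop where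
  analyticAt_coeff : ∀ i, AnalyticAt 𝕜 (fun x => (P x).coeff i) x₀
  monic : ∀ x, (P x).Monic
  natDegree_eq : ∀ x, (P x).natDegree = n

theorem isMonicAnalyticAt_add_ofFn [DecidableEq 𝕜] {u : 𝕜[X]} {n : ℕ} (hu : u.Monic)
    (hn : u.natDegree = n) {r : E → Fin n → 𝕜} {x₀ : E} (hr : AnalyticAt 𝕜 r x₀) :
    IsMonicAnalyticAt (fun x => u + ofFn n (r x)) n x₀ := by
  have hdeg x : (ofFn n (r x)).degree < u.degree :=
    (ofFn_degree_lt _).trans_eq (hn ▸ degree_eq_natDegree hu.ne_zero).symm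
  refine ⟨fun i => ?_, fun x => hu.add_of_left (hdeg x),
    fun x => (natDegree_add_eq_left_of_degree_lt (hdeg x)).trans hn⟩
  simp only [coeff_add]
  refine analyticAt_const.fun_add ?_
  rcases lt_or_ge i n with hi | hi
  · simpa only [ofFn_coeff_eq_val_of_lt _ hi] using analyticAt_pi_iff.1 hr ⟨i, hi⟩
  · simpa only [ofFn_coeff_eq_zero_of_ge _ hi] using analyticAt_const

theorem IsMonicAnalyticAt.exists_eq_add_ofFn [DecidableEq 𝕜] {P : E → 𝕜[X]} {n : ℕ} {x₀ : E}
    (hP : IsMonicAnalyticAt P n x₀) :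
    ∃ r : E → Fin n → 𝕜, AnalyticAt 𝕜 r x₀ ∧ r x₀ = 0 ∧ ∀ x, P x = P x₀ + ofFn n (r x) := by
  refine ⟨fun x => toFn n (P x - P x₀), analyticAt_pi_iff.2 fun i => ?_, by simp, fun x => ?_⟩
  · simpa only [toFn, LinearMap.pi_apply, lcoeff_apply, coeff_sub] using
      (hP.analyticAt_coeff i).fun_sub analyticAt_const
  · have hdeg y : (P y).degree = n :=
      hP.natDegree_eq y ▸ degree_eq_natDegree (hP.monic y).ne_zero
    have hlt : (P x - P x₀).degree < n := hdeg x ▸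
      degree_sub_lt_left ((hdeg x).trans (hdeg x₀).symm) (hP.monic x).ne_zero
        ((hP.monic x).leadingCoeff.trans (hP.monic x₀).leadingCoeff.symm)
    rw [ofFn_toFn_of_degree_lt hlt, add_sub_cancel]

theorem exists_analyticAt_factorization [CompleteSpace 𝕜] [DecidableEq 𝕜] {u v : 𝕜[X]} {m n : ℕ}
    (huv : IsCoprime u v) (hu : u.degree = m) (hv : v.degree = n) :
    ∃ g : (Fin (m + n) → 𝕜) → (Fin m → 𝕜) × (Fin n → 𝕜), AnalyticAt 𝕜 g 0 ∧ g 0 = 0 ∧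
      ∀ᶠ y in 𝓝 0, u * v + ofFn (m + n) y = (u + ofFn m (g y).1) * (v + ofFn n (g y).2) := by
  let D := LinearEquiv.ofInjectiveOfFinrankEq (mulDifferential u v m n)
    (mulDifferential_injective huv hu hv) (by simp)
  let B := ((LinearMap.mul 𝕜 𝕜[X]).compl₁₂ (ofFn m) (ofFn n)).compr₂ (toFn (m + n))
  obtain ⟨g, hg, hg₀, hgr⟩ := exists_analyticAt_right_inverse_linear_add_bilinear
    D.toContinuousLinearEquiv B.toContinuousBilinearMap
  refine ⟨g, hg, hg₀, hgr.mono fun y hy => ?_⟩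
  have hB : ofFn (m + n) (B (g y).1 (g y).2) = ofFn m (g y).1 * ofFn n (g y).2 :=
    ofFn_toFn_of_degree_lt (degree_mul_lt_add (ofFn_degree_lt _) (ofFn_degree_lt _).le)
  have hy' : ofFn (m + n) (mulDifferential u v m n (g y) + B (g y).1 (g y).2) = ofFn (m + n) y :=
    congrArg (ofFn (m + n)) hy
  rw [← hy', map_add, ofFn_mulDifferential hu hv, hB]
  ring

theorem IsMonicAnalyticAt.exists_eq_mul [CompleteSpace 𝕜] {P : E → 𝕜[X]} {u v : 𝕜[X]} {x₀ : E}
    (hP : IsMonicAnalyticAt P (u.natDegree + v.natDegree) x₀) (hu : u.Monic) (hv : v.Monic)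
    (huv : IsCoprime u v) (hPx₀ : P x₀ = u * v) :
    ∃ U V : E → 𝕜[X], IsMonicAnalyticAt U u.natDegree x₀ ∧ IsMonicAnalyticAt V v.natDegree x₀ ∧
      U x₀ = u ∧ V x₀ = v ∧ ∀ᶠ x in 𝓝 x₀, P x = U x * V x := by
  classical
  obtain ⟨r, hr, hr₀, hPr⟩ := hP.exists_eq_add_ofFn
  obtain ⟨g, hg, hg₀, hfac⟩ := exists_analyticAt_factorization huv
    (degree_eq_natDegree hu.ne_zero) (degree_eq_natDegree hv.ne_zero)
  have hgr : AnalyticAt 𝕜 (fun x => g (r x)) x₀ := (hr₀.symm ▸ hg).comp hr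
  refine ⟨_, _, isMonicAnalyticAt_add_ofFn hu rfl (analyticAt_fst.comp hgr),
    isMonicAnalyticAt_add_ofFn hv rfl (analyticAt_snd.comp hgr), ?_, ?_, ?_⟩
  · simp [hr₀, hg₀]
  · simp [hr₀, hg₀]
  · filter_upwards [(hr₀ ▸ hr.continuousAt.tendsto).eventually hfac] with x hx
    rw [hPr, hPx₀, hx]
    rfl

end Hensel

section AnalyticRoots

theorem prod_X_sub_C_scaleRoots {R : Type*} [CommRing R] [IsDomain R] (s : Multiset R) (c : R) :
    (s.map fun a => X - C a).prod.scaleRoots c = (s.map fun a => X - C (c * a)).prod := by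
  induction s using Multiset.induction_on with
  | empty => simp
  | cons a s ih => simp [mul_scaleRoots_of_noZeroDivisors, ih, mul_comm c]

theorem taylor_prod_X_sub_C {R : Type*} [CommRing R] (s : Multiset R) (c : R) :
    taylor c (s.map fun a => X - C a).prod = (s.map fun a => X - C (a - c)).prod := by
  change taylorAlgHom c _ = _
  simp [map_multiset_prod, Multiset.map_map, sub_sub_eq_add_sub]

variable {𝕜 E : Type*} [NontriviallyNormedField 𝕜] [NormedAddCommGroup E] [NormedSpace 𝕜 E]

/-- Near `x₀`, the monic polynomials `P x` split into linear factors whose roots, listed with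
multiplicity, are analytic functions of `x`. -/
def HasAnalyticRootsAt (P : E → 𝕜[X]) (x₀ : E) : Prop :=
  ∃ L : Multiset (E → 𝕜), (∀ f ∈ L, AnalyticAt 𝕜 f x₀) ∧
    ∀ᶠ x in 𝓝 x₀, P x = (L.map fun f => X - C (f x)).prod

namespace HasAnalyticRootsAt

variable {P Q : E → 𝕜[X]} {x₀ : E}

theorem congr (hP : HasAnalyticRootsAt P x₀) (h : Q =ᶠ[𝓝 x₀] P) : HasAnalyticRootsAt Q x₀ := by
  obtain ⟨L, hL, hPL⟩ := hP
  exact ⟨L, hL, h.trans hPL⟩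

theorem X_pow (n : ℕ) (x₀ : E) : HasAnalyticRootsAt (fun _ => (X ^ n : 𝕜[X])) x₀ :=
  ⟨Multiset.replicate n fun _ => 0,
    fun _ hf => (Multiset.eq_of_mem_replicate hf).symm ▸ analyticAt_const, by simp⟩

theorem mul (hP : HasAnalyticRootsAt P x₀) (hQ : HasAnalyticRootsAt Q x₀) :
    HasAnalyticRootsAt (fun x => P x * Q x) x₀ := by
  obtain ⟨L, hL, hPL⟩ := hP
  obtain ⟨M, hM, hQM⟩ := hQ
  refine ⟨L + M, fun f hf => (Multiset.mem_add.1 hf).elim (hL f) (hM f), ?_⟩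
  filter_upwards [hPL, hQM] with x hPx hQx
  rw [hPx, hQx, Multiset.map_add, Multiset.prod_add]

theorem scaleRoots (hP : HasAnalyticRootsAt P x₀) {s : E → 𝕜} (hs : AnalyticAt 𝕜 s x₀) :
    HasAnalyticRootsAt (fun x => (P x).scaleRoots (s x)) x₀ := by
  obtain ⟨L, hL, hPL⟩ := hP
  refine ⟨L.map fun f => s * f,
    Multiset.forall_mem_map_iff.2 fun f hf => hs.mul (hL f hf), hPL.mono fun x hx => ?_⟩
  simpa only [hx, Multiset.map_map, Function.comp_def, Pi.mul_apply] using
    prod_X_sub_C_scaleRoots (L.map fun f => f x) (s x)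

theorem taylor (hP : HasAnalyticRootsAt P x₀) {c : E → 𝕜} (hc : AnalyticAt 𝕜 c x₀) :
    HasAnalyticRootsAt (fun x => taylor (c x) (P x)) x₀ := by
  obtain ⟨L, hL, hPL⟩ := hP
  refine ⟨L.map fun f => f - c,
    Multiset.forall_mem_map_iff.2 fun f hf => (hL f hf).sub hc, hPL.mono fun x hx => ?_⟩
  simpa only [hx, Multiset.map_map, Function.comp_def, Pi.sub_apply] using
    taylor_prod_X_sub_C (L.map fun f => f x) (c x)

end HasAnalyticRootsAt

end AnalyticRoots

section SplitPolynomials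

theorem sum_map_sq_eq {R : Type*} [CommRing R] (s : Multiset R) :
    (s.map (· ^ 2)).sum = s.sum ^ 2 - 2 * s.esymm 2 := by
  induction s using Multiset.induction_on with
  | empty => simp [Multiset.esymm, Multiset.powersetCard_zero_right 1]
  | cons a s ih =>
    have hesymm : (a ::ₘ s).esymm 2 = s.esymm 2 + a * s.sum := by
      simpa [Multiset.esymm, Multiset.powersetCard_cons, Multiset.powersetCard_one] using
        Multiset.sum_map_mul_left (s := s) (a := a) (f := id)
    rw [Multiset.map_cons, Multiset.sum_cons, Multiset.sum_cons, ih, hesymm]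
    ring

theorem roots_scaleRoots_of_splits {R : Type*} [CommRing R] [IsDomain R] {p : R[X]} (hp : p.Splits)
    (hmonic : p.Monic) (c : R) : (p.scaleRoots c).roots = p.roots.map (c * ·) := by
  conv_lhs => rw [hp.eq_prod_roots_of_monic hmonic, prod_X_sub_C_scaleRoots]
  simpa only [Multiset.map_map, Function.comp_def] using
    roots_multiset_prod_X_sub_C (p.roots.map (c * ·))

theorem roots_taylor_of_splits {R : Type*} [CommRing R] [IsDomain R] {p : R[X]} (hp : p.Splits)
    (hmonic : p.Monic) (c : R) : (taylor c p).roots = p.roots.map (· - c) := by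
  conv_lhs => rw [hp.eq_prod_roots_of_monic hmonic, taylor_prod_X_sub_C]
  simpa only [Multiset.map_map, Function.comp_def] using
    roots_multiset_prod_X_sub_C (p.roots.map (· - c))

theorem exists_coprime_mul_of_roots_ne {K : Type*} [Field K] {p : K[X]} (hp : p.Monic) {a b : K}
    (ha : p.IsRoot a) (hb : p.IsRoot b) (hab : a ≠ b) :
    ∃ u v : K[X], u.Monic ∧ v.Monic ∧ IsCoprime u v ∧ p = u * v ∧ 0 < u.natDegree ∧
      0 < v.natDegree := by
  obtain ⟨v, hpv, hav⟩ := exists_eq_pow_rootMultiplicity_mul_and_not_dvd p hp.ne_zero a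
  have hu : ((X - C a) ^ p.rootMultiplicity a).Monic := (monic_X_sub_C a).pow _
  have hv : v.Monic := hu.of_mul_monic_left (hpv ▸ hp)
  have hvb : v.IsRoot b := by
    have hpb : p.eval b = (b - a) ^ p.rootMultiplicity a * v.eval b := by
      conv_lhs => rw [hpv]
      simp
    exact (mul_eq_zero.1 (hpb.symm.trans hb)).resolve_left (pow_ne_zero _ (sub_ne_zero.2 hab.symm))
  refine ⟨_, v, hu, hv, ((irreducible_X_sub_C a).coprime_iff_not_dvd.2 hav).pow_left, hpv, ?_, ?_⟩
  · rw [natDegree_pow, natDegree_X_sub_C, mul_one]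
    exact (rootMultiplicity_pos hp.ne_zero).2 ha
  · exact natDegree_pos_iff_degree_pos.2 (degree_pos_of_root hv.ne_zero hvb)

theorem exists_ne_of_sum_eq_zero {R : Type*} [Ring R] [NoZeroDivisors R] [CharZero R]
    {s : Multiset R} (hsum : s.sum = 0) (hsq : (s.map (· ^ 2)).sum ≠ 0) :
    ∃ a ∈ s, ∃ b ∈ s, a ≠ b := by
  by_contra! h
  refine hsq (Multiset.sum_eq_zero (Multiset.forall_mem_map_iff.2 fun a ha => ?_))
  have hrep : s = Multiset.replicate s.card a :=
    Multiset.eq_replicate_card.2 fun b hb => h b hb a ha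
  have hcard : (s.card : R) ≠ 0 :=
    Nat.cast_ne_zero.2 (Multiset.card_pos_iff_exists_mem.2 ⟨a, ha⟩).ne'
  have hsa : (s.card : R) * a = 0 := by
    rw [← nsmul_eq_mul, ← Multiset.sum_replicate, ← hrep, hsum]
  simp [(mul_eq_zero.1 hsa).resolve_left hcard]

theorem abs_coeff_le_of_splits {p : ℝ[X]} (hp : p.Splits) (hmonic : p.Monic) (i : ℕ) :
    |p.coeff i| ≤ √(p.roots.map (· ^ 2)).sum ^ (p.natDegree - i) * p.natDegree.choose i := by
  have hroots : ∀ a ∈ p.roots, |a| ≤ √(p.roots.map (· ^ 2)).sum := fun a ha =>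
    Real.abs_le_sqrt <| Multiset.single_le_sum
      (Multiset.forall_mem_map_iff.2 fun b _ => sq_nonneg b) _ (Multiset.mem_map_of_mem _ ha)
  simpa using coeff_le_of_roots_le (f := RingHom.id ℝ) i hmonic (by simpa) (by simpa using hroots)

theorem eq_X_pow_of_roots_sum_sq_eq_zero {R : Type*} [CommRing R] [LinearOrder R]
    [IsStrictOrderedRing R] {p : R[X]} (hp : p.Splits) (hmonic : p.Monic)
    (hsq : (p.roots.map (· ^ 2)).sum = 0) : p = X ^ p.natDegree := by
  have hroots : ∀ a ∈ p.roots, a = 0 := fun a ha =>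
    pow_eq_zero_iff two_ne_zero |>.1 <| Multiset.all_zero_of_le_zero_le_of_sum_eq_zero
      (Multiset.forall_mem_map_iff.2 fun b _ => sq_nonneg b) hsq _ (Multiset.mem_map_of_mem _ ha)
  conv_lhs => rw [hp.eq_prod_roots_of_monic hmonic, Multiset.eq_replicate_card.2 hroots]
  simp [hp.natDegree_eq_card_roots]

theorem abs_im_pow_natDegree_le_norm_aeval {p : ℝ[X]} (hp : p.Splits) (hmonic : p.Monic) (z : ℂ) :
    |z.im| ^ p.natDegree ≤ ‖aeval z p‖ := by
  have hz : ‖aeval z p‖ = (p.roots.map fun a : ℝ => ‖z - a‖).prod := by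
    conv_lhs => rw [hp.eq_prod_roots_of_monic hmonic]
    rw [map_multiset_prod, ← normHom_apply, map_multiset_prod]
    simp [Multiset.map_map]
  calc |z.im| ^ p.natDegree = (p.roots.map fun _ => |z.im|).prod := by
        rw [Multiset.map_const', Multiset.prod_replicate, hp.natDegree_eq_card_roots]
    _ ≤ (p.roots.map fun a : ℝ => ‖z - a‖).prod :=
        Multiset.prod_map_le_prod_map₀ _ _ (fun _ _ => abs_nonneg _) fun a _ => by
          simpa using Complex.abs_im_le_norm (z - a)
    _ = ‖aeval z p‖ := hz.symm

theorem tendsto_aeval_of_tendsto_coeff {ι : Type*} {l : Filter ι} {P : ι → ℝ[X]} {p : ℝ[X]}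
    (hdeg : ∀ i, (P i).natDegree = p.natDegree)
    (hlim : ∀ k, Tendsto (fun i => (P i).coeff k) l (𝓝 (p.coeff k))) (z : ℂ) :
    Tendsto (fun i => aeval z (P i)) l (𝓝 (aeval z p)) := by
  simp only [aeval_eq_sum_range, hdeg]
  exact tendsto_finsetSum _ fun k _ => (hlim k).smul_const _

theorem splits_of_tendsto_coeff {ι : Type*} {l : Filter ι} [l.NeBot] {P : ι → ℝ[X]} {p : ℝ[X]}
    (hmonic : ∀ i, (P i).Monic) (hdeg : ∀ i, (P i).natDegree = p.natDegree)
    (hsplits : ∀ᶠ i in l, (P i).Splits)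
    (hlim : ∀ k, Tendsto (fun i => (P i).coeff k) l (𝓝 (p.coeff k))) : p.Splits := by
  refine (IsAlgClosed.splits (p.map (algebraMap ℝ ℂ))).of_splits_map _ fun z hz => ?_
  have hroot : aeval z p = 0 := (mem_aroots.1 hz).2
  have him : |z.im| ^ p.natDegree ≤ ‖aeval z p‖ :=
    ge_of_tendsto (tendsto_aeval_of_tendsto_coeff hdeg hlim z).norm <| hsplits.mono fun i hi =>
      hdeg i ▸ abs_im_pow_natDegree_le_norm_aeval hi (hmonic i) z
  rw [hroot, norm_zero] at him
  exact ⟨z.re, Complex.ext rfl (abs_eq_zero.1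
    (eq_zero_of_pow_eq_zero (him.antisymm (by positivity)))).symm⟩

end SplitPolynomials

section AnalyticOrder

variable {𝕜 F : Type*} [NontriviallyNormedField 𝕜] [NormedAddCommGroup F] [NormedSpace 𝕜 F]
  {f : 𝕜 → F} {z₀ : 𝕜}

theorem natCast_le_analyticOrderAt_of_isBigO (hf : AnalyticAt 𝕜 f z₀) {N : ℕ}
    (hO : f =O[𝓝[≠] z₀] fun z => (z - z₀) ^ N) : (N : ℕ∞) ≤ analyticOrderAt f z₀ := by
  by_contra! hlt
  obtain ⟨n, hn⟩ := ENat.ne_top_iff_exists.1 hlt.ne_top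
  rw [← hn, Nat.cast_lt] at hlt
  obtain ⟨g, hg, hg₀, hfg⟩ := (hf.analyticOrderAt_eq_natCast).1 hn.symm
  have hgO : g =O[𝓝[≠] z₀] fun z => (z - z₀) ^ (N - n) := by
    refine ((Asymptotics.isBigO_refl (fun z => ((z - z₀) ^ n)⁻¹) (𝓝[≠] z₀)).smul hO).congr' ?_ ?_
    · filter_upwards [nhdsWithin_le_nhds hfg, self_mem_nhdsWithin] with z hz hne
      rw [hz, inv_smul_smul₀ (pow_ne_zero _ (sub_ne_zero.2 hne))]
    · filter_upwards [self_mem_nhdsWithin] with z hne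
      rw [smul_eq_mul, inv_mul_eq_div, pow_sub₀ _ (sub_ne_zero.2 hne) hlt.le, div_eq_mul_inv]
  have hpow : Tendsto (fun z => (z - z₀) ^ (N - n)) (𝓝[≠] z₀) (𝓝 0) := by
    refine tendsto_nhdsWithin_of_tendsto_nhds ?_
    have hcont : Continuous fun z => (z - z₀) ^ (N - n) := by fun_prop
    simpa [(Nat.sub_pos_of_lt hlt).ne'] using hcont.tendsto z₀
  exact hg₀ (tendsto_nhds_unique (hg.continuousAt.tendsto.mono_left nhdsWithin_le_nhds)
    (hgO.trans_tendsto hpow))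

theorem even_analyticOrderNatAt_of_eventually_nonneg {f : ℝ → ℝ} {t₀ : ℝ} (hf : AnalyticAt ℝ f t₀)
    (hnonneg : ∀ᶠ t in 𝓝 t₀, 0 ≤ f t) : Even (analyticOrderNatAt f t₀) := by
  by_contra hodd
  rw [Nat.not_even_iff_odd] at hodd
  have hfin : analyticOrderAt f t₀ ≠ ⊤ := fun htop => by simp [analyticOrderNatAt, htop] at hodd
  obtain ⟨g, hg, hg₀, hfg⟩ := hf.analyticOrderAt_ne_top.1 hfin
  have hnonneg' : ∀ᶠ t in 𝓝 t₀, 0 ≤ (t - t₀) ^ analyticOrderNatAt f t₀ * g t := by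
    filter_upwards [hnonneg, hfg] with t ht hft using ht.trans_eq hft
  have hright : 0 ≤ g t₀ := by
    refine ge_of_tendsto (hg.continuousAt.continuousWithinAt (s := Set.Ioi t₀)) ?_
    filter_upwards [nhdsWithin_le_nhds hnonneg', self_mem_nhdsWithin] with t ht hlt
    exact nonneg_of_mul_nonneg_right ht (pow_pos (sub_pos.2 hlt) _)
  have hleft : g t₀ ≤ 0 := by
    refine le_of_tendsto (hg.continuousAt.continuousWithinAt (s := Set.Iio t₀)) ?_
    filter_upwards [nhdsWithin_le_nhds hnonneg', self_mem_nhdsWithin] with t ht hlt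
    exact nonpos_of_mul_nonneg_right ht (hodd.pow_neg (sub_neg.2 hlt))
  exact hg₀ (hleft.antisymm hright)

end AnalyticOrder

section SplitFamilies

variable {𝕜 E : Type*} [NontriviallyNormedField 𝕜] [NormedAddCommGroup E] [NormedSpace 𝕜 E]

namespace IsMonicAnalyticAt

variable {P : E → 𝕜[X]} {n : ℕ} {x₀ : E}

theorem analyticAt_roots_esymm (hP : IsMonicAnalyticAt P n x₀)
    (hsplits : ∀ᶠ x in 𝓝 x₀, (P x).Splits) (k : ℕ) :
    AnalyticAt 𝕜 (fun x => (P x).roots.esymm k) x₀ := by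
  have hcard : ∀ᶠ x in 𝓝 x₀, (P x).roots.card = n :=
    hsplits.mono fun x hx => hx.natDegree_eq_card_roots.symm.trans (hP.natDegree_eq x)
  rcases le_or_gt k n with hk | hk
  · refine (analyticAt_const.fun_mul (hP.analyticAt_coeff (n - k))).congr
      (f := fun x => (-1) ^ k * (P x).coeff (n - k)) ?_
    filter_upwards [hcard] with x hx
    rw [coeff_eq_esymm_roots_of_card (hx.trans (hP.natDegree_eq x).symm)
      ((hP.natDegree_eq x).symm ▸ Nat.sub_le n k), hP.natDegree_eq x, hP.monic x, one_mul,
      Nat.sub_sub_self hk, ← mul_assoc, ← mul_pow, neg_one_mul, neg_neg, one_pow, one_mul]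
  · refine analyticAt_const.congr (f := fun _ => 0) ?_
    filter_upwards [hcard] with x hx
    simp [Multiset.esymm, Multiset.powersetCard_eq_empty k (hx.trans_lt hk)]

theorem analyticAt_roots_sum (hP : IsMonicAnalyticAt P n x₀)
    (hsplits : ∀ᶠ x in 𝓝 x₀, (P x).Splits) : AnalyticAt 𝕜 (fun x => (P x).roots.sum) x₀ := by
  simpa [Multiset.esymm, Multiset.powersetCard_one] using hP.analyticAt_roots_esymm hsplits 1

theorem analyticAt_roots_sum_sq (hP : IsMonicAnalyticAt P n x₀)
    (hsplits : ∀ᶠ x in 𝓝 x₀, (P x).Splits) :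
    AnalyticAt 𝕜 (fun x => ((P x).roots.map (· ^ 2)).sum) x₀ := by
  simp only [sum_map_sq_eq]
  exact ((hP.analyticAt_roots_sum hsplits).fun_pow 2).fun_sub
    (analyticAt_const.fun_mul (hP.analyticAt_roots_esymm hsplits 2))

theorem taylor (hP : IsMonicAnalyticAt P n x₀) {c : E → 𝕜} (hc : AnalyticAt 𝕜 c x₀) :
    IsMonicAnalyticAt (fun x => taylor (c x) (P x)) n x₀ where
  analyticAt_coeff i := by
    have hdeg x : (hasseDeriv i (P x)).natDegree < n + 1 :=
      Nat.lt_succ_of_le <| (natDegree_hasseDeriv_le _ _).trans <| hP.natDegree_eq x ▸ Nat.sub_le _ _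
    simp only [taylor_coeff, eval_eq_sum_range' (hdeg _), hasseDeriv_coeff]
    exact Finset.analyticAt_fun_sum _ fun j _ =>
      (analyticAt_const.fun_mul (hP.analyticAt_coeff _)).fun_mul (hc.fun_pow j)
  monic x := (hP.monic x).comp_X_add_C (c x)
  natDegree_eq x := (natDegree_taylor _ _).trans (hP.natDegree_eq x)

end IsMonicAnalyticAt

theorem IsMonicAnalyticAt.exists_eq_scaleRoots {P : 𝕜 → 𝕜[X]} {n : ℕ} {t₀ : 𝕜}
    (hP : IsMonicAnalyticAt P n t₀) {m : ℕ}
    (horder : ∀ i < n, ((m * (n - i) : ℕ) : ℕ∞) ≤ analyticOrderAt (fun t => (P t).coeff i) t₀) :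
    ∃ Q, IsMonicAnalyticAt Q n t₀ ∧ ∀ᶠ t in 𝓝 t₀, P t = (Q t).scaleRoots ((t - t₀) ^ m) := by
  classical
  choose! h hh hPh using fun i hi =>
    (natCast_le_analyticOrderAt (hP.analyticAt_coeff i)).1 (horder i hi)
  have hQ : IsMonicAnalyticAt (fun t => X ^ n + ofFn n fun i : Fin n => h i t) n t₀ :=
    isMonicAnalyticAt_add_ofFn (monic_X_pow n) (natDegree_X_pow n)
      (analyticAt_pi_iff.2 fun i => hh i i.2)
  refine ⟨_, hQ, ?_⟩
  filter_upwards [(Finset.range n).eventually_all.2 fun i hi => hPh i (Finset.mem_range.1 hi)]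
    with t ht
  ext i
  rw [coeff_scaleRoots, hQ.natDegree_eq t]
  rcases lt_trichotomy i n with hi | rfl | hi
  · rw [ht i (Finset.mem_range.2 hi), coeff_add, coeff_X_pow, if_neg hi.ne,
      ofFn_coeff_eq_val_of_lt _ hi, zero_add, smul_eq_mul, pow_mul, mul_comm]
  · rw [Nat.sub_self, pow_zero, mul_one]
    have hPi := hP.monic t
    have hQi := hQ.monic t
    rw [Monic, leadingCoeff, hP.natDegree_eq t] at hPi
    rw [Monic, leadingCoeff, hQ.natDegree_eq t] at hQi
    exact hPi.trans hQi.symm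
  · rw [coeff_eq_zero_of_natDegree_lt ((hP.natDegree_eq t).trans_lt hi),
      coeff_eq_zero_of_natDegree_lt ((hQ.natDegree_eq t).trans_lt hi), zero_mul]

end SplitFamilies

section Hyperbolic

/-- A family of hyperbolic polynomials: real, monic, of degree `n`, with coefficients analytic at
`t₀`, and with only real roots for `t` near `t₀`. -/
structure IsHyperbolicAt (P : ℝ → ℝ[X]) (n : ℕ) (t₀ : ℝ) : Prop
    extends IsMonicAnalyticAt P n t₀ where
  splits : ∀ᶠ t in 𝓝 t₀, (P t).Splits

theorem IsMonicAnalyticAt.isHyperbolicAt_of_punctured {P : ℝ → ℝ[X]} {n : ℕ} {t₀ : ℝ}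
    (hP : IsMonicAnalyticAt P n t₀) (hsplits : ∀ᶠ t in 𝓝[≠] t₀, (P t).Splits) :
    IsHyperbolicAt P n t₀ := by
  have ht₀ : (P t₀).Splits := splits_of_tendsto_coeff hP.monic
    (fun t => (hP.natDegree_eq t).trans (hP.natDegree_eq t₀).symm) hsplits
    fun k => (hP.analyticAt_coeff k).continuousAt.tendsto.mono_left nhdsWithin_le_nhds
  exact ⟨hP, (eventually_nhdsWithin_iff.1 hsplits).mono fun t ht =>
    (eq_or_ne t t₀).elim (fun h => h ▸ ht₀) ht⟩

namespace IsHyperbolicAt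

variable {P : ℝ → ℝ[X]} {n : ℕ} {t₀ : ℝ}

theorem taylor (hP : IsHyperbolicAt P n t₀) {c : ℝ → ℝ} (hc : AnalyticAt ℝ c t₀) :
    IsHyperbolicAt (fun t => taylor (c t) (P t)) n t₀ where
  toIsMonicAnalyticAt := hP.toIsMonicAnalyticAt.taylor hc
  splits := hP.splits.mono fun t ht => ht.taylor (c t)

theorem exists_roots_sum_taylor_eq_zero (hP : IsHyperbolicAt P n t₀) :
    ∃ c, AnalyticAt ℝ c t₀ ∧ ∀ᶠ t in 𝓝 t₀, (Polynomial.taylor (c t) (P t)).roots.sum = 0 := by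
  refine ⟨fun t => (P t).roots.sum / n, (hP.analyticAt_roots_sum hP.splits).div_const,
    hP.splits.mono fun t ht => ?_⟩
  have hcard : (P t).roots.card = n := ht.natDegree_eq_card_roots.symm.trans (hP.natDegree_eq t)
  rw [roots_taylor_of_splits ht (hP.monic t), Multiset.sum_map_sub, Multiset.map_id',
    Multiset.map_const', Multiset.sum_replicate, hcard, nsmul_eq_mul, sub_eq_zero]
  rcases eq_or_ne n 0 with rfl | hn
  · simp [Multiset.card_eq_zero.1 hcard]
  · rw [mul_div_cancel₀ _ (Nat.cast_ne_zero.2 hn)]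

theorem le_analyticOrderAt_coeff (hP : IsHyperbolicAt P n t₀) {m : ℕ}
    (hsq : (fun t => ((P t).roots.map (· ^ 2)).sum) =O[𝓝 t₀] fun t => (t - t₀) ^ (m + m)) (i : ℕ) :
    ((m * (n - i) : ℕ) : ℕ∞) ≤ analyticOrderAt (fun t => (P t).coeff i) t₀ := by
  refine natCast_le_analyticOrderAt_of_isBigO (hP.analyticAt_coeff i)
    (Asymptotics.IsBigO.mono ?_ nhdsWithin_le_nhds)
  have hsqrt : (fun t => √((P t).roots.map (· ^ 2)).sum) =O[𝓝 t₀] fun t => (t - t₀) ^ m := by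
    refine .trans (hsq.sqrt (.of_forall fun t => (Even.add_self m).pow_nonneg _)) ?_
    simpa only [pow_add, Real.sqrt_mul_self_eq_abs] using Asymptotics.isBigO_abs_left.2
      (Asymptotics.isBigO_refl (fun t => (t - t₀) ^ m) (𝓝 t₀))
  calc (fun t => (P t).coeff i)
      =O[𝓝 t₀] fun t => √((P t).roots.map (· ^ 2)).sum ^ (n - i) := by
        refine .of_bound (n.choose i) (hP.splits.mono fun t ht => ?_)
        simpa [hP.natDegree_eq t, abs_of_nonneg, mul_comm] using
          abs_coeff_le_of_splits ht (hP.monic t) i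
    _ =O[𝓝 t₀] fun t => (t - t₀) ^ (m * (n - i)) := by
        simpa only [pow_mul] using hsqrt.pow (n - i)

theorem exists_eq_scaleRoots (hP : IsHyperbolicAt P n t₀) {m : ℕ}
    (hsq : (fun t => ((P t).roots.map (· ^ 2)).sum) =O[𝓝 t₀] fun t => (t - t₀) ^ (m + m)) :
    ∃ Q, IsHyperbolicAt Q n t₀ ∧ ∀ᶠ t in 𝓝 t₀, P t = (Q t).scaleRoots ((t - t₀) ^ m) := by
  obtain ⟨Q, hQ, hPQ⟩ := hP.toIsMonicAnalyticAt.exists_eq_scaleRoots fun i _ =>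
    hP.le_analyticOrderAt_coeff hsq i
  refine ⟨Q, hQ.isHyperbolicAt_of_punctured ?_, hPQ⟩
  filter_upwards [nhdsWithin_le_nhds hPQ, nhdsWithin_le_nhds hP.splits, self_mem_nhdsWithin]
    with t ht hsplits hne
  have hQt : Q t = (P t).scaleRoots ((t - t₀) ^ m)⁻¹ := by
    rw [ht, ← scaleRoots_mul, mul_inv_cancel₀ (pow_ne_zero _ (sub_ne_zero.2 hne)), scaleRoots_one]
  exact hQt ▸ hsplits.scaleRoots _

theorem exists_ne_isRoot_of_scaleRoots {Q : ℝ → ℝ[X]} (hQ : IsHyperbolicAt Q n t₀) {m : ℕ}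
    {g : ℝ → ℝ} (hg : ContinuousAt g t₀) (hg₀ : g t₀ ≠ 0)
    (hPQ : ∀ᶠ t in 𝓝 t₀, P t = (Q t).scaleRoots ((t - t₀) ^ m))
    (hsum : ∀ᶠ t in 𝓝 t₀, (P t).roots.sum = 0)
    (hsq : ∀ᶠ t in 𝓝 t₀, ((P t).roots.map (· ^ 2)).sum = (t - t₀) ^ (m + m) * g t) :
    ∃ a b, (Q t₀).IsRoot a ∧ (Q t₀).IsRoot b ∧ a ≠ b := by
  have hroots : ∀ᶠ t in 𝓝[≠] t₀, (Q t).roots.sum = 0 ∧ ((Q t).roots.map (· ^ 2)).sum = g t := by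
    filter_upwards [nhdsWithin_le_nhds hPQ, nhdsWithin_le_nhds hQ.splits, nhdsWithin_le_nhds hsum,
      nhdsWithin_le_nhds hsq, self_mem_nhdsWithin] with t ht hsplits ht₁ ht₂ hne
    have hne' : (t - t₀) ^ m ≠ 0 := pow_ne_zero _ (sub_ne_zero.2 hne)
    rw [ht, roots_scaleRoots_of_splits hsplits (hQ.monic t), Multiset.sum_map_mul_left,
      Multiset.map_id'] at ht₁
    simp only [ht, roots_scaleRoots_of_splits hsplits (hQ.monic t), Multiset.map_map,
      Function.comp_def, mul_pow, Multiset.sum_map_mul_left, pow_add, ← sq] at ht₂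
    exact ⟨(mul_eq_zero.1 ht₁).resolve_left hne', mul_left_cancel₀ (pow_ne_zero 2 hne') ht₂⟩
  have hsum₀ : (Q t₀).roots.sum = 0 := tendsto_nhds_unique_of_eventuallyEq
    ((hQ.analyticAt_roots_sum hQ.splits).continuousAt.tendsto.mono_left nhdsWithin_le_nhds)
    tendsto_const_nhds (hroots.mono fun t ht => ht.1)
  have hsq₀ : ((Q t₀).roots.map (· ^ 2)).sum = g t₀ := tendsto_nhds_unique_of_eventuallyEq
    ((hQ.analyticAt_roots_sum_sq hQ.splits).continuousAt.tendsto.mono_left nhdsWithin_le_nhds)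
    (hg.tendsto.mono_left nhdsWithin_le_nhds) (hroots.mono fun t ht => ht.2)
  obtain ⟨a, ha, b, hb, hab⟩ := exists_ne_of_sum_eq_zero hsum₀ (hsq₀.trans_ne hg₀)
  exact ⟨a, b, isRoot_of_mem_roots ha, isRoot_of_mem_roots hb, hab⟩

theorem exists_rescaling_of_roots_sum_eq_zero (hP : IsHyperbolicAt P n t₀)
    (hsum : ∀ᶠ t in 𝓝 t₀, (P t).roots.sum = 0) (hne : ¬ P =ᶠ[𝓝 t₀] fun _ => X ^ n) :
    ∃ Q, ∃ m : ℕ, IsHyperbolicAt Q n t₀ ∧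
      (∀ᶠ t in 𝓝 t₀, P t = (Q t).scaleRoots ((t - t₀) ^ m)) ∧
      ∃ a b, (Q t₀).IsRoot a ∧ (Q t₀).IsRoot b ∧ a ≠ b := by
  have hσ := hP.analyticAt_roots_sum_sq hP.splits
  have hfin : analyticOrderAt (fun t => ((P t).roots.map (· ^ 2)).sum) t₀ ≠ ⊤ := by
    refine fun htop => hne ?_
    filter_upwards [analyticOrderAt_eq_top.1 htop, hP.splits] with t ht hsplits
    exact hP.natDegree_eq t ▸ eq_X_pow_of_roots_sum_sq_eq_zero hsplits (hP.monic t) ht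
  obtain ⟨g, hg, hg₀, hσg⟩ := hσ.analyticOrderAt_ne_top.1 hfin
  obtain ⟨m, hm⟩ := even_analyticOrderNatAt_of_eventually_nonneg hσ <| .of_forall fun t =>
    Multiset.sum_nonneg (Multiset.forall_mem_map_iff.2 fun a _ => sq_nonneg a)
  simp only [hm, smul_eq_mul] at hσg
  have hO : (fun t => ((P t).roots.map (· ^ 2)).sum) =O[𝓝 t₀] fun t => (t - t₀) ^ (m + m) := by
    simpa using hσg.trans_isBigO
      ((Asymptotics.isBigO_refl _ (𝓝 t₀)).mul (hg.continuousAt.tendsto.isBigO_one ℝ))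
  obtain ⟨Q, hQ, hPQ⟩ := hP.exists_eq_scaleRoots hO
  exact ⟨Q, m, hQ, hPQ, hQ.exists_ne_isRoot_of_scaleRoots hg.continuousAt hg₀ hPQ hsum hσg⟩

theorem exists_eq_mul_of_ne (hP : IsHyperbolicAt P n t₀) {a b : ℝ} (ha : (P t₀).IsRoot a)
    (hb : (P t₀).IsRoot b) (hab : a ≠ b) :
    ∃ U V : ℝ → ℝ[X], ∃ k < n, ∃ l < n, IsHyperbolicAt U k t₀ ∧ IsHyperbolicAt V l t₀ ∧
      P =ᶠ[𝓝 t₀] fun t => U t * V t := by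
  obtain ⟨u, v, hu, hv, huv, hPuv, hu₀, hv₀⟩ :=
    exists_coprime_mul_of_roots_ne (hP.monic t₀) ha hb hab
  obtain rfl : u.natDegree + v.natDegree = n := by
    rw [← hP.natDegree_eq t₀, hPuv, hu.natDegree_mul hv]
  obtain ⟨U, V, hU, hV, -, -, hPUV⟩ := hP.toIsMonicAnalyticAt.exists_eq_mul hu hv huv hPuv
  refine ⟨U, V, _, by omega, _, by omega, ⟨hU, ?_⟩, ⟨hV, ?_⟩, hPUV⟩
  · filter_upwards [hP.splits, hPUV] with t ht hmul
    exact ht.of_dvd (hP.monic t).ne_zero ⟨V t, hmul⟩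
  · filter_upwards [hP.splits, hPUV] with t ht hmul
    exact ht.of_dvd (hP.monic t).ne_zero (Dvd.intro_left _ hmul.symm)

theorem hasAnalyticRootsAt (hP : IsHyperbolicAt P n t₀) : HasAnalyticRootsAt P t₀ := by
  induction n using Nat.strong_induction_on generalizing P with
  | _ n ih =>
    obtain ⟨c, hc, hsum⟩ := hP.exists_roots_sum_taylor_eq_zero
    suffices hcentred : HasAnalyticRootsAt (fun t => Polynomial.taylor (c t) (P t)) t₀ from
      (hcentred.taylor hc.neg).congr (.of_forall fun t => by simp [taylor_taylor])
    by_cases hX : (fun t => Polynomial.taylor (c t) (P t)) =ᶠ[𝓝 t₀] fun _ => X ^ n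
    · exact (HasAnalyticRootsAt.X_pow n t₀).congr hX
    obtain ⟨Q, m, hQ, hPQ, a, b, ha, hb, hab⟩ :=
      (hP.taylor hc).exists_rescaling_of_roots_sum_eq_zero hsum hX
    obtain ⟨U, V, k, hk, l, hl, hU, hV, hQUV⟩ := hQ.exists_eq_mul_of_ne ha hb hab
    have hscale : AnalyticAt ℝ (fun t => (t - t₀) ^ m) t₀ :=
      (analyticAt_id.fun_sub analyticAt_const).fun_pow m
    exact ((((ih k hk hU).mul (ih l hl hV)).congr hQUV).scaleRoots hscale).congr hPQ

end IsHyperbolicAt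

end Hyperbolic

section Indexing

variable {α β γ : Type*}

theorem exists_equiv_of_map_univ_eq [Fintype α] [Fintype β] {f : α → γ} {g : β → γ}
    (h : Finset.univ.val.map f = Finset.univ.val.map g) : ∃ e : α ≃ β, ∀ a, g (e a) = f a := by
  classical
  have hfiber : ∀ c, Nonempty ({a // f a = c} ≃ {b // g b = c}) := fun c => by
    have hcount := congrArg (Multiset.count c) h
    simp only [Multiset.count_map, ← Finset.filter_val, Finset.card_val, eq_comm (a := c)] at hcount
    rwa [← Fintype.card_eq, Fintype.card_subtype, Fintype.card_subtype]
  exact ⟨Equiv.ofFiberEquiv fun c => (hfiber c).some, Equiv.ofFiberEquiv_map _⟩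

theorem exists_map_univ_eq_of_map_eq [Fintype β] {s : Multiset α} {f : α → γ} {g : β → γ}
    (h : s.map f = Finset.univ.val.map g) :
    ∃ u : β → α, Finset.univ.val.map u = s ∧ ∀ b, f (u b) = g b := by
  classical
  obtain ⟨e, he⟩ := exists_equiv_of_map_univ_eq (h.symm.trans (s.map_univ f).symm)
  refine ⟨fun b => e b, ?_, he⟩
  calc Finset.univ.val.map (fun b => (e b : α))
      = (Finset.univ.val.map e).map fun x : s => (x : α) := (Multiset.map_map _ _ _).symm
    _ = s := by rw [Multiset.map_univ_val_equiv, Multiset.map_univ_coe]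

theorem sum_sum_singleton_eq_map_univ [Fintype α] {κ : α → Type*} [∀ a, Fintype (κ a)]
    (f : (Σ a, κ a) → γ) : ∑ a, ∑ k, {f ⟨a, k⟩} = Finset.univ.val.map f :=
  calc ∑ a, ∑ k, {f ⟨a, k⟩} = ∑ i, {f i} := (Fintype.sum_sigma fun i => ({f i} : Multiset γ)).symm
    _ = ((Finset.univ.val.map f).map fun a => {a}).sum := by rw [Multiset.map_map]; rfl
    _ = Finset.univ.val.map f := Multiset.sum_map_singleton _

end Indexing

section Eigenvalues

variable {m : Type*} [Fintype m] [DecidableEq m]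

theorem analyticAt_charpoly_coeff {𝕜 E R : Type*} [NontriviallyNormedField 𝕜]
    [NormedAddCommGroup E] [NormedSpace 𝕜 E] [NormedCommRing R] [NormedAlgebra 𝕜 R]
    {A : E → Matrix m m R} {x₀ : E} (hA : ∀ i j, AnalyticAt 𝕜 (fun x => A x i j) x₀) (k : ℕ) :
    AnalyticAt 𝕜 (fun x => (A x).charpoly.coeff k) x₀ := by
  refine (AnalyticAt.aeval_mvPolynomial (f := fun x (ij : m × m) => A x ij.1 ij.2)
    (fun ij => hA ij.1 ij.2) ((Matrix.charpoly.univ 𝕜 m).coeff k)).congr (.of_forall fun x => ?_)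
  exact Matrix.charpoly.univ_coeff_eval₂Hom m (algebraMap 𝕜 R) (fun ij => A x ij.1 ij.2) k

variable {𝕜 : Type*} [RCLike 𝕜] {A : ℝ → Matrix m m 𝕜} {t₀ : ℝ}

theorem exists_isHyperbolicAt_map_eq_charpoly (hA : ∀ i j, AnalyticAt ℝ (fun t => A t i j) t₀)
    (hherm : ∀ᶠ t in 𝓝 t₀, (A t).IsHermitian) :
    ∃ P : ℝ → ℝ[X], IsHyperbolicAt P (Fintype.card m) t₀ ∧
      ∀ᶠ t in 𝓝 t₀, (P t).map (algebraMap ℝ 𝕜) = (A t).charpoly := by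
  choose! μ hμ using fun t (ht : (A t).IsHermitian) =>
    (⟨ht.eigenvalues, ht.charpoly_eq⟩ : ∃ μ : m → ℝ, (A t).charpoly = ∏ i, (X - C (μ i : 𝕜)))
  have hmap : ∀ᶠ t in 𝓝 t₀, (∏ i, (X - C (μ t i))).map (algebraMap ℝ 𝕜) = (A t).charpoly :=
    hherm.mono fun t ht => by simp [hμ t ht, Polynomial.map_prod]
  refine ⟨fun t => ∏ i, (X - C (μ t i)), ⟨⟨fun k => ?_, fun t => ?_, fun t => ?_⟩, ?_⟩, hmap⟩
  · refine ((RCLike.reCLM.analyticAt _).comp (analyticAt_charpoly_coeff hA k)).congr ?_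
    filter_upwards [hmap] with t ht
    simp [← ht]
  · exact monic_prod_X_sub_C _ _
  · exact natDegree_finsetProd_X_sub_C_eq_card _ _
  · exact .of_forall fun t => Splits.prod fun i _ => Splits.X_sub_C _

theorem exists_analyticAt_charpoly_roots_eq (hA : ∀ i j, AnalyticAt ℝ (fun t => A t i j) t₀)
    (hherm : ∀ᶠ t in 𝓝 t₀, (A t).IsHermitian) :
    ∃ L : Multiset (ℝ → ℝ), (∀ f ∈ L, AnalyticAt ℝ f t₀) ∧
      ∀ᶠ t in 𝓝 t₀, (A t).charpoly.roots = L.map fun f => (f t : 𝕜) := by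
  obtain ⟨P, hP, hPA⟩ := exists_isHyperbolicAt_map_eq_charpoly hA hherm
  obtain ⟨L, hL, hPL⟩ := hP.hasAnalyticRootsAt
  refine ⟨L, hL, ?_⟩
  filter_upwards [hPA, hPL] with t ht hroots
  have hprod : (A t).charpoly = ((L.map fun f => (f t : 𝕜)).map fun a => X - C a).prod := by
    rw [← ht, hroots, Polynomial.map_multiset_prod]
    simp [Multiset.map_map]
  rw [hprod, roots_multiset_prod_X_sub_C]

theorem exists_analyticAt_eigenvalue_branches {κ : Type*} [Fintype κ]
    (hA : ∀ i j, AnalyticAt ℝ (fun t => A t i j) t₀) (hherm : ∀ᶠ t in 𝓝 t₀, (A t).IsHermitian)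
    {μ : κ → ℝ} (hμ : (A t₀).charpoly.roots = Finset.univ.val.map fun i => (μ i : 𝕜)) :
    ∃ Λ : κ → ℝ → ℝ, (∀ i, AnalyticAt ℝ (Λ i) t₀) ∧ (∀ i, Λ i t₀ = μ i) ∧
      ∀ᶠ t in 𝓝 t₀, (A t).charpoly.roots = Finset.univ.val.map fun i => (Λ i t : 𝕜) := by
  obtain ⟨L, hL, hroots⟩ := exists_analyticAt_charpoly_roots_eq hA hherm
  obtain ⟨Λ, rfl, hΛμ⟩ := exists_map_univ_eq_of_map_eq (hroots.self_of_nhds.symm.trans hμ)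
  refine ⟨Λ, fun i => hL _ (Multiset.mem_map_of_mem _ (Finset.mem_univ i)),
    fun i => RCLike.ofReal_injective (hΛμ i), ?_⟩
  simpa only [Multiset.map_map, Function.comp_def] using hroots

theorem exists_abs_sub_le_of_analyticAt {κ : Type*} [Finite κ] {f : κ → ℝ → ℝ} {t₀ : ℝ}
    (hf : ∀ i, AnalyticAt ℝ (f i) t₀) :
    ∃ C > 0, ∀ᶠ t in 𝓝 t₀, ∀ i j, f i t₀ = f j t₀ → |f i t - f j t| ≤ C * |t - t₀| := by
  have := Fintype.ofFinite κ
  have hdiff : AnalyticAt ℝ (fun t (ij : κ × κ) => f ij.1 t - f ij.2 t) t₀ :=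
    analyticAt_pi_iff.2 fun ij => (hf ij.1).fun_sub (hf ij.2)
  obtain ⟨C, hC, hbound⟩ := hdiff.differentiableAt.isBigO_sub.exists_pos
  refine ⟨C, hC, hbound.bound.mono fun t ht i j hij => ?_⟩
  simpa [hij] using (norm_le_pi_norm _ (i, j)).trans ht

end Eigenvalues

theorem hermitian_analytic_eigenvalue_branches_general {𝕜 m ι : Type*} [RCLike 𝕜] [Fintype m]
    [DecidableEq m] [Fintype ι] (n : ι → ℕ) (lam : ι → ℝ) {A : ℝ → Matrix m m 𝕜}
    (hA : ∀ i j, AnalyticAt ℝ (fun ε => A ε i j) 0) (hherm : ∀ᶠ ε in 𝓝 0, (A ε).IsHermitian)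
    (hroots : (A 0).charpoly.roots = ∑ j, Multiset.replicate (n j) (lam j : 𝕜)) :
    ∃ ε₀ C : ℝ, 0 < ε₀ ∧ 0 < C ∧
      ∃ Λ : (j : ι) → Fin (n j) → ℝ → ℝ,
        (∀ j k, AnalyticOnNhd ℝ (Λ j k) (Set.Ioo (-ε₀) ε₀)) ∧
        (∀ j k, Λ j k 0 = lam j) ∧
        ∀ ε ∈ Set.Ioo (-ε₀) ε₀,
          (A ε).charpoly.roots = ∑ j, ∑ k : Fin (n j), ({(Λ j k ε : 𝕜)} : Multiset 𝕜) ∧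
          ∀ j, ∀ k k' : Fin (n j), |Λ j k ε - Λ j k' ε| ≤ C * |ε| := by
  have hroots' : (A 0).charpoly.roots =
      (Finset.univ : Finset (Σ j, Fin (n j))).val.map fun i => (lam i.1 : 𝕜) := by
    rw [hroots, ← sum_sum_singleton_eq_map_univ]
    simp [Multiset.nsmul_singleton]
  obtain ⟨Λ, hΛ, hΛ₀, hΛroots⟩ := exists_analyticAt_eigenvalue_branches hA hherm hroots'
  obtain ⟨C, hC, hΛC⟩ := exists_abs_sub_le_of_analyticAt hΛ
  have hΛana : ∀ᶠ ε in 𝓝 0, ∀ i, AnalyticAt ℝ (Λ i) ε :=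
    eventually_all.2 fun i => (hΛ i).eventually_analyticAt
  obtain ⟨ε₀, hε₀, hball⟩ := Metric.eventually_nhds_iff_ball.1 (hΛroots.and (hΛC.and hΛana))
  simp only [Real.ball_eq_Ioo, zero_sub, zero_add, sub_zero] at hball
  refine ⟨ε₀, C, hε₀, hC, fun j k => Λ ⟨j, k⟩, fun j k ε hε => (hball ε hε).2.2 _,
    fun j k => hΛ₀ _, fun ε hε => ⟨?_, fun j k k' => ?_⟩⟩
  · exact (hball ε hε).1.trans (sum_sum_singleton_eq_map_univ fun i => (Λ i ε : 𝕜)).symm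
  · exact (hball ε hε).2.1 _ _ ((hΛ₀ ⟨j, k⟩).trans (hΛ₀ ⟨j, k'⟩).symm)

/-- Analytic perturbation theory for Hermitian matrices (item (I) of Appendix A4): if
`M₀` is Hermitian with distinct eigenvalues `λ₁ < ⋯ < λ_p` of multiplicities
`n₁, …, n_p` and `M₁` is Hermitian, then for small `ε` the eigenvalues of `M₀ + ε M₁`
are given by real-analytic branches `λ_{j,k}(ε)` with `λ_{j,k}(0) = λ_j`, and branches
coming from the same unperturbed eigenvalue stay within `C|ε|` of each other. -/
theorem hermitian_analytic_eigenvalue_branches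
    (d p : ℕ) (n : Fin p → ℕ) (hsum : ∑ j, n j = d)
    (lam : Fin p → ℝ) (hlam : StrictMono lam)
    (M₀ M₁ : Matrix (Fin d) (Fin d) ℂ)
    (hM₀ : M₀.IsHermitian) (hM₁ : M₁.IsHermitian)
    (hroots : M₀.charpoly.roots = ∑ j, Multiset.replicate (n j) ((lam j : ℝ) : ℂ)) :
    ∃ (ε₀ C : ℝ), 0 < ε₀ ∧ 0 < C ∧
      ∃ Λ : (j : Fin p) → Fin (n j) → ℝ → ℝ,
        (∀ j k, AnalyticOnNhd ℝ (Λ j k) (Set.Ioo (-ε₀) ε₀)) ∧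
        (∀ j k, Λ j k 0 = lam j) ∧
        ∀ ε ∈ Set.Ioo (-ε₀) ε₀,
          (M₀ + (ε : ℂ) • M₁).charpoly.roots
              = ∑ j, ∑ k : Fin (n j), ({((Λ j k ε : ℝ) : ℂ)} : Multiset ℂ) ∧
          ∀ j, ∀ k k' : Fin (n j), |Λ j k ε - Λ j k' ε| ≤ C * |ε| := by
  exact hermitian_analytic_eigenvalue_branches_general n lam (A := fun ε => M₀ + (ε : ℂ) • M₁)
    (fun i j => analyticAt_const.add ((Complex.ofRealCLM.analyticAt 0).mul analyticAt_const))
    (.of_forall fun ε => hM₀.add (hM₁.smul (Complex.conj_ofReal ε))) (by simpa using hroots)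
end

section
/- Let d = r + s with r, s ≥ 1, let M̂ be a d×d Hermitian matrix whose eigenvalue 0 has multiplicity r and whose remaining eigenvalues 0 < a₁ < ⋯ < a_s are simple, and let Γ > 0. Then there exist C > 0 and ε̄ > 0 such that for every ε ∈ (0, ε̄) and every d×d Hermitian matrix M₁ with ‖M₁‖ ≤ Γ, the matrix ε M̂ + ε² M₁ has exactly r eigenvalues (counted with multiplicity) in the interval [−Cε², Cε²] and, for each j = 1, …, s, exactly one (simple) eigenvalue in [ε a_j − Cε², ε a_j + Cε²]; moreover these s + 1 intervals are pairwise disjoint and contain all eigenvalues of ε M̂ + ε² M₁. -/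
/-- The ℓ²-operator norm of a complex matrix. -/
noncomputable def matOpNorm {m n : Type*} [Fintype m] [Fintype n] [DecidableEq n]
    (M : Matrix m n ℂ) : ℝ :=
  ‖LinearMap.toContinuousLinearMap (Matrix.toEuclideanLin (𝕜 := ℂ) M)‖

/-!
The perturbation `ε² M₁` moves `ε M̂` by at most `Γ ε²` in norm, so the eigenspace of `M̂` for `a`
consists of vectors `v` with `‖(ε M̂ + ε² M₁) v - ε a v‖ ≤ Γ ε² ‖v‖`. Expanding in an orthonormal
eigenbasis of the perturbed matrix, a nonzero vector of this kind must have a nonzero coefficient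
at some eigenvalue within `Γ ε²` of `ε a`, so there are at least as many such eigenvalues as the
multiplicity of `a`. For small `ε` the windows around the points `ε a` are disjoint; since the
multiplicities already add up to the dimension, all these lower bounds are equalities and no
eigenvalue lies outside the windows.
-/

open Module Matrix Filter Function Topology

section Eigenbasis

variable {𝕜 E κ : Type*} [RCLike 𝕜] [NormedAddCommGroup E] [InnerProductSpace 𝕜 E] [Fintype κ]
  (b : OrthonormalBasis κ 𝕜 E) {T : E →ₗ[𝕜] E} {μ : κ → 𝕜}

lemma repr_map_eq_mul_of_eigenbasis (hb : ∀ k, T (b k) = μ k • b k) (v : E) (k : κ) :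
    b.repr (T v) k = μ k * b.repr v k := by
  classical
  have hcoord : b.toBasis.coord k ∘ₗ T = μ k • b.toBasis.coord k :=
    b.toBasis.ext fun l => by
      rcases eq_or_ne l k with rfl | hlk
      · simp [hb]
      · simp [hb, hlk]
  simpa using LinearMap.congr_fun hcoord v

lemma norm_map_sub_smul_sq (hb : ∀ k, T (b k) = μ k • b k) (c : 𝕜) (v : E) :
    ‖T v - c • v‖ ^ 2 = ∑ k, dist (μ k) c ^ 2 * ‖b.repr v k‖ ^ 2 := by
  rw [← b.repr.norm_map, EuclideanSpace.norm_sq_eq]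
  refine Finset.sum_congr rfl fun k _ => ?_
  rw [map_sub, map_smul, PiLp.sub_apply, PiLp.smul_apply, repr_map_eq_mul_of_eigenbasis b hb,
    smul_eq_mul, ← sub_mul, norm_mul, mul_pow, dist_eq_norm]

lemma eq_zero_of_norm_map_sub_smul_le (hb : ∀ k, T (b k) = μ k • b k) {c : 𝕜} {δ : ℝ} {v : E}
    (hv : ‖T v - c • v‖ ≤ δ * ‖v‖) (hcoord : ∀ k, dist (μ k) c ≤ δ → b.repr v k = 0) :
    v = 0 := by
  by_contra hv0
  have hδ : 0 ≤ δ := nonneg_of_mul_nonneg_left ((norm_nonneg _).trans hv) (norm_pos_iff.2 hv0)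
  have hlt (k : κ) (hk : b.repr v k ≠ 0) :
      δ ^ 2 * ‖b.repr v k‖ ^ 2 < dist (μ k) c ^ 2 * ‖b.repr v k‖ ^ 2 := by
    have hfar : δ < dist (μ k) c := not_le.1 (mt (hcoord k) hk)
    have := norm_pos_iff.2 hk
    gcongr
  obtain ⟨k₀, hk₀⟩ : ∃ k, b.repr v k ≠ 0 := by
    by_contra! hzero
    exact hv0 (b.repr.map_eq_zero_iff.1 (PiLp.ext hzero))
  have : δ ^ 2 * ‖v‖ ^ 2 < δ ^ 2 * ‖v‖ ^ 2 :=
    calc δ ^ 2 * ‖v‖ ^ 2 = ∑ k, δ ^ 2 * ‖b.repr v k‖ ^ 2 := by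
          rw [← b.repr.norm_map, EuclideanSpace.norm_sq_eq, Finset.mul_sum]
      _ < ∑ k, dist (μ k) c ^ 2 * ‖b.repr v k‖ ^ 2 := by
          refine Finset.sum_lt_sum (fun k _ => ?_) ⟨k₀, Finset.mem_univ _, hlt k₀ hk₀⟩
          by_cases hk : b.repr v k = 0
          · simp [hk]
          · exact (hlt k hk).le
      _ = ‖T v - c • v‖ ^ 2 := (norm_map_sub_smul_sq b hb c v).symm
      _ ≤ (δ * ‖v‖) ^ 2 := by gcongr
      _ = δ ^ 2 * ‖v‖ ^ 2 := mul_pow _ _ _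
  exact this.false

lemma finrank_le_card_eigenvalues_near (hb : ∀ k, T (b k) = μ k • b k) {c : 𝕜} {δ : ℝ}
    {V : Submodule 𝕜 E} (hV : ∀ v ∈ V, ‖T v - c • v‖ ≤ δ * ‖v‖) :
    finrank 𝕜 V ≤ (Finset.univ.filter fun k => dist (μ k) c ≤ δ).card := by
  set S := Finset.univ.filter fun k => dist (μ k) c ≤ δ
  let coords : V →ₗ[𝕜] S → 𝕜 := LinearMap.pi fun k => b.toBasis.coord k ∘ₗ V.subtype
  have hinj : Injective coords := by
    refine (injective_iff_map_eq_zero coords).2 fun v hv => Subtype.ext ?_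
    refine eq_zero_of_norm_map_sub_smul_le b hb (hV v v.2) fun k hk => ?_
    simpa [coords] using congr_fun hv ⟨k, by simpa [S] using hk⟩
  simpa using LinearMap.finrank_le_finrank_of_injective hinj

end Eigenbasis

section Counting

variable {ι κ : Type*} [Fintype ι] [Fintype κ]

lemma card_eq_and_exists_mem_of_card_le_sum {F : ι → Finset κ} {m : ι → ℕ}
    (hF : Pairwise (Disjoint on F)) (hle : ∀ i, m i ≤ (F i).card)
    (hsum : Fintype.card κ ≤ ∑ i, m i) :
    (∀ i, (F i).card = m i) ∧ ∀ k, ∃ i, k ∈ F i := by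
  classical
  have hunion : (Finset.univ.biUnion F).card = ∑ i, (F i).card :=
    Finset.card_biUnion fun i _ j _ hij => hF hij
  have hunion_le : (Finset.univ.biUnion F).card ≤ Fintype.card κ := Finset.card_le_univ _
  have hsum_le : ∑ i, m i ≤ ∑ i, (F i).card := Finset.sum_le_sum fun i _ => hle i
  constructor
  · have hsum_eq : ∑ i, m i = ∑ i, (F i).card := by omega
    exact fun i => ((Finset.sum_eq_sum_iff_of_le fun i _ => hle i).1 hsum_eq i
      (Finset.mem_univ i)).symm
  · have huniv : Finset.univ.biUnion F = Finset.univ :=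
      (Finset.card_eq_iff_eq_univ _).1 (by omega)
    exact fun k => by simpa using huniv.ge (Finset.mem_univ k)

theorem card_eigenvalues_near_eq_finrank {𝕜 E : Type*} [RCLike 𝕜] [NormedAddCommGroup E]
    [InnerProductSpace 𝕜 E] (b : OrthonormalBasis κ 𝕜 E) {T : E →ₗ[𝕜] E} {μ : κ → 𝕜}
    (hb : ∀ k, T (b k) = μ k • b k) {c : ι → 𝕜} {δ : ℝ} {V : ι → Submodule 𝕜 E}
    (hV : ∀ i, ∀ v ∈ V i, ‖T v - c i • v‖ ≤ δ * ‖v‖)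
    (hsep : Pairwise fun i j => 2 * δ < dist (c i) (c j))
    (hdim : Fintype.card κ ≤ ∑ i, finrank 𝕜 (V i)) :
    (∀ i, (Finset.univ.filter fun k => dist (μ k) (c i) ≤ δ).card = finrank 𝕜 (V i)) ∧
      ∀ k, ∃ i, dist (μ k) (c i) ≤ δ := by
  have hdisj : Pairwise
      (Disjoint on fun i => Finset.univ.filter fun k => dist (μ k) (c i) ≤ δ) := fun i j hij => by
    refine Finset.disjoint_left.2 fun k hki hkj => ?_
    simp only [Finset.mem_filter, Finset.mem_univ, true_and] at hki hkj
    linarith [hsep hij, dist_triangle_left (c i) (c j) (μ k)]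
  simpa using card_eq_and_exists_mem_of_card_le_sum hdisj
    (fun i => finrank_le_card_eigenvalues_near b hb (hV i)) hdim

end Counting

section HermitianMatrix

variable {𝕜 n : Type*} [RCLike 𝕜] [Fintype n] [DecidableEq n] {M : Matrix n n 𝕜}

lemma toEuclideanLin_eigenvectorBasis (hM : M.IsHermitian) (k : n) :
    toEuclideanLin M (hM.eigenvectorBasis k) =
      (hM.eigenvalues k : 𝕜) • hM.eigenvectorBasis k := by
  ext i
  simpa [toLpLin_apply, RCLike.real_smul_eq_coe_mul]
    using congr_fun (hM.mulVec_eigenvectorBasis k) i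

lemma finrank_eigenspace_eq_count_roots_charpoly (hM : M.IsHermitian) (c : 𝕜) :
    finrank 𝕜 (End.eigenspace (toEuclideanLin M) c) = M.charpoly.roots.count c := by
  have hsemisimple := (isSymmetric_toEuclideanLin_iff.2 hM).isFinitelySemisimple
  rw [← hsemisimple.maxGenEigenspace_eq_eigenspace, LinearMap.finrank_maxGenEigenspace_eq,
    toEuclideanLin, toLpLin_eq_toLin, charpoly_toLin, Polynomial.count_roots]

lemma card_roots_charpoly_of_isHermitian (hM : M.IsHermitian) :
    M.charpoly.roots.card = Fintype.card n := by
  rw [hM.roots_charpoly_eq_eigenvalues, Multiset.card_map, Finset.card_val, Finset.card_univ]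

end HermitianMatrix

lemma norm_toEuclideanLin_le {m n : Type*} [Fintype m] [Fintype n] [DecidableEq n]
    (M : Matrix m n ℂ) (v : EuclideanSpace ℂ n) :
    ‖toEuclideanLin M v‖ ≤ matOpNorm M * ‖v‖ :=
  (LinearMap.toContinuousLinearMap (toEuclideanLin M)).le_opNorm v

lemma count_sum_replicate {ι α : Type*} [Fintype ι] [DecidableEq α] {a : ι → α}
    (ha : Injective a) (m : ι → ℕ) (i : ι) :
    (∑ j, Multiset.replicate (m j) (a j)).count (a i) = m i := by
  classical
  simp [Multiset.count_sum', Multiset.count_replicate, ha.eq_iff]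

lemma eventually_pairwise_lt_dist {ι X : Type*} [Finite ι] [MetricSpace X] {a : ι → X}
    (ha : Injective a) {α : Type*} {l : Filter α} {f : α → ℝ} (hf : Tendsto f l (𝓝 0)) :
    ∀ᶠ x in l, Pairwise fun i j => f x < dist (a i) (a j) := by
  refine eventually_all.2 fun i => eventually_all.2 fun j => eventually_imp_distrib_left.2 ?_
  exact fun hij => hf.eventually_lt_const (dist_pos.2 (ha.ne hij))

lemma dist_ofReal_le_iff (x c δ : ℝ) : dist (x : ℂ) c ≤ δ ↔ c - δ ≤ x ∧ x ≤ c + δ := by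
  rw [Complex.isometry_ofReal.dist_eq, ← Metric.mem_closedBall, Real.closedBall_eq_Icc,
    Set.mem_Icc]

lemma norm_perturbed_sub_smul_le {n : Type*} [Fintype n] [DecidableEq n] {M M₁ : Matrix n n ℂ}
    {a Γ : ℝ} (hM₁ : matOpNorm M₁ ≤ Γ) (ε : ℝ) {v : EuclideanSpace ℂ n}
    (hv : v ∈ End.eigenspace (toEuclideanLin M) (a : ℂ)) :
    ‖toEuclideanLin ((ε : ℂ) • M + (ε : ℂ) ^ 2 • M₁) v - ((ε * a : ℝ) : ℂ) • v‖ ≤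
      Γ * ε ^ 2 * ‖v‖ := by
  have hremainder : toEuclideanLin ((ε : ℂ) • M + (ε : ℂ) ^ 2 • M₁) v - ((ε * a : ℝ) : ℂ) • v =
      (ε : ℂ) ^ 2 • toEuclideanLin M₁ v := by
    rw [map_add, map_smul, map_smul, LinearMap.add_apply, LinearMap.smul_apply,
      LinearMap.smul_apply, End.mem_eigenspace_iff.1 hv, smul_smul, Complex.ofReal_mul,
      add_sub_cancel_left]
  calc _ = ε ^ 2 * ‖toEuclideanLin M₁ v‖ := by
        rw [hremainder, norm_smul, norm_pow, Complex.norm_real, Real.norm_eq_abs, sq_abs]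
    _ ≤ ε ^ 2 * (Γ * ‖v‖) := by
        gcongr
        exact (norm_toEuclideanLin_le M₁ v).trans (by gcongr)
    _ = Γ * ε ^ 2 * ‖v‖ := by ring

theorem hermitian_perturbed_eigenvalue_location_general {n ι : Type*} [Fintype n] [DecidableEq n]
    [Fintype ι] {M : Matrix n n ℂ} (hM : M.IsHermitian) {a : ι → ℝ} (ha : Injective a)
    {m : ι → ℕ} (hroots : M.charpoly.roots = ∑ i, Multiset.replicate (m i) (a i : ℂ)) (Γ : ℝ) :
    ∀ᶠ ε : ℝ in 𝓝[>] 0, ∀ M₁ : Matrix n n ℂ, matOpNorm M₁ ≤ Γ →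
      ∀ hH : ((ε : ℂ) • M + (ε : ℂ) ^ 2 • M₁).IsHermitian,
        (∀ i, (Finset.univ.filter fun k => ε * a i - Γ * ε ^ 2 ≤ hH.eigenvalues k ∧
          hH.eigenvalues k ≤ ε * a i + Γ * ε ^ 2).card = m i) ∧
        (Pairwise fun i j => Disjoint (Set.Icc (ε * a i - Γ * ε ^ 2) (ε * a i + Γ * ε ^ 2))
          (Set.Icc (ε * a j - Γ * ε ^ 2) (ε * a j + Γ * ε ^ 2))) ∧
        ∀ k, ∃ i, ε * a i - Γ * ε ^ 2 ≤ hH.eigenvalues k ∧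
          hH.eigenvalues k ≤ ε * a i + Γ * ε ^ 2 := by
  have hmult (i : ι) : finrank ℂ (End.eigenspace (toEuclideanLin M) (a i : ℂ)) = m i := by
    rw [finrank_eigenspace_eq_count_roots_charpoly hM, hroots]
    exact count_sum_replicate (Complex.ofReal_injective.comp ha) m i
  have hdim : Fintype.card n = ∑ i, m i := by
    rw [← card_roots_charpoly_of_isHermitian hM, hroots, Multiset.card_sum]
    simp only [Multiset.card_replicate]
  have htendsto : Tendsto (fun ε => 2 * Γ * ε) (𝓝[>] 0) (𝓝 0) :=
    ((continuous_const_mul (2 * Γ)).tendsto' 0 0 (mul_zero _)).mono_left nhdsWithin_le_nhds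
  filter_upwards [eventually_pairwise_lt_dist ha htendsto, self_mem_nhdsWithin]
    with ε hgap (hε : 0 < ε) M₁ hM₁ hH
  have hsep : Pairwise fun i j => 2 * (Γ * ε ^ 2) < dist (ε * a i) (ε * a j) := fun i j hij =>
    calc 2 * (Γ * ε ^ 2) = ε * (2 * Γ * ε) := by ring
      _ < ε * dist (a i) (a j) := by gcongr; exact hgap hij
      _ = dist (ε * a i) (ε * a j) := by
        rw [Real.dist_eq, Real.dist_eq, ← mul_sub, abs_mul, abs_of_pos hε]
  have hcount := card_eigenvalues_near_eq_finrank hH.eigenvectorBasis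
    (toEuclideanLin_eigenvectorBasis hH) (c := fun i => ((ε * a i : ℝ) : ℂ))
    (fun i v hv => norm_perturbed_sub_smul_le hM₁ ε hv)
    (by simpa only [Complex.isometry_ofReal.dist_eq] using hsep)
    (by simp only [hmult, hdim, le_refl])
  simp only [Complex.coe_algebraMap, dist_ofReal_le_iff, hmult] at hcount
  refine ⟨hcount.1, fun i j hij => ?_, hcount.2⟩
  simp only [← Real.closedBall_eq_Icc]
  exact Metric.closedBall_disjoint_closedBall (by linarith [hsep hij])

/-- Item (II)(i) of Appendix A4: if `M̂` is Hermitian with eigenvalue `0` of multiplicity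
`r` and simple eigenvalues `0 < a₁ < ⋯ < a_s`, and `‖M₁‖ ≤ Γ` is Hermitian, then for `ε`
small the matrix `ε M̂ + ε² M₁` has exactly `r` eigenvalues within `Cε²` of `0` and one
simple eigenvalue within `Cε²` of each `ε a_j`, with the `s + 1` intervals pairwise
disjoint and containing all the eigenvalues. -/
theorem hermitian_perturbed_eigenvalue_location
    (r s d : ℕ) (hr : 1 ≤ r) (hs : 1 ≤ s) (hd : d = r + s)
    (Mhat : Matrix (Fin d) (Fin d) ℂ) (hMhat : Mhat.IsHermitian)
    (a : Fin s → ℝ) (hmono : StrictMono a) (hpos : ∀ j, 0 < a j)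
    (hroots : Mhat.charpoly.roots
      = Multiset.replicate r 0 + ∑ j, ({((a j : ℝ) : ℂ)} : Multiset ℂ))
    (Γ : ℝ) (hΓ : 0 < Γ) :
    ∃ C εbar : ℝ, 0 < C ∧ 0 < εbar ∧
      ∀ ε ∈ Set.Ioo (0 : ℝ) εbar,
      ∀ M₁ : Matrix (Fin d) (Fin d) ℂ, M₁.IsHermitian → matOpNorm M₁ ≤ Γ →
      ∀ hM : ((ε : ℂ) • Mhat + (ε : ℂ) ^ 2 • M₁).IsHermitian,
        (Finset.univ.filter fun k : Fin d =>
          -(C * ε ^ 2) ≤ hM.eigenvalues k ∧ hM.eigenvalues k ≤ C * ε ^ 2).card = r ∧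
        (∀ j : Fin s, (Finset.univ.filter fun k : Fin d =>
          ε * a j - C * ε ^ 2 ≤ hM.eigenvalues k ∧
            hM.eigenvalues k ≤ ε * a j + C * ε ^ 2).card = 1) ∧
        (∀ j : Fin s, Disjoint (Set.Icc (-(C * ε ^ 2)) (C * ε ^ 2))
          (Set.Icc (ε * a j - C * ε ^ 2) (ε * a j + C * ε ^ 2))) ∧
        (∀ j j' : Fin s, j ≠ j' →
          Disjoint (Set.Icc (ε * a j - C * ε ^ 2) (ε * a j + C * ε ^ 2))
            (Set.Icc (ε * a j' - C * ε ^ 2) (ε * a j' + C * ε ^ 2))) ∧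
        (∀ k : Fin d,
          (-(C * ε ^ 2) ≤ hM.eigenvalues k ∧ hM.eigenvalues k ≤ C * ε ^ 2) ∨
          ∃ j : Fin s, ε * a j - C * ε ^ 2 ≤ hM.eigenvalues k ∧
            hM.eigenvalues k ≤ ε * a j + C * ε ^ 2) := by
  have ha : Injective fun o : Option (Fin s) => o.elim 0 a :=
    Option.injective_iff.2 ⟨hmono.injective, fun ⟨j, hj⟩ => (hpos j).ne' hj⟩
  obtain ⟨εbar, hεbar, hlocate⟩ := mem_nhdsGT_iff_exists_Ioo_subset.1 <|
    hermitian_perturbed_eigenvalue_location_general hMhat ha (m := fun o => o.elim r fun _ => 1)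
      (by simpa [Fintype.sum_option] using hroots) Γ
  refine ⟨Γ, εbar, hΓ, hεbar, fun ε hε M₁ _ hM₁ hM => ?_⟩
  obtain ⟨hcard, hdisj, hcover⟩ := hlocate hε M₁ hM₁ hM
  exact ⟨by simpa using hcard none, fun j => hcard (some j),
    fun j => by simpa using hdisj (Option.some_ne_none j).symm,
    fun j j' hj => hdisj ((Option.some_injective _).ne hj),
    fun k => by
      simpa only [Option.exists, Option.elim, mul_zero, zero_sub, zero_add] using hcover k⟩
end

section
/- Let d = r + s with r, s ≥ 1, let M̂ be a d×d Hermitian matrix whose eigenvalue 0 has multiplicity r and whose remaining eigenvalues 0 < a₁ < ⋯ < a_s are simple, and let Γ > 0. Let (x, ε) ↦ M₁(x, ε) be a family of d×d Hermitian matrices defined for x ∈ ℝ and ε ∈ (0, ε'], continuously differentiable in (x, ε), with ‖M₁(x, ε)‖ ≤ Γ, ‖∂_x M₁(x, ε)‖ ≤ Γ and ‖∂_ε M₁(x, ε)‖ ≤ Γ everywhere. Then there exist C > 0 and ε̄ ∈ (0, ε'] such that for each j = 1, …, s there is a continuously differentiable function λ_j : ℝ × (0, ε̄) → ℝ with the following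 properties: for every (x, ε), λ_j(x, ε) is a simple eigenvalue of ε M̂ + ε² M₁(x, ε); |λ_j(x, ε) − ε a_j| ≤ Cε²; |∂_x λ_j(x, ε)| ≤ Cε²; and |∂_ε λ_j(x, ε)| ≤ C. -/
/-!
Factoring out `ε`, the operator `ε A₀ + ε² A₁` is `ε (A₀ + ε A₁)`. By the implicit function theorem
applied to the characteristic polynomial, a simple eigenvalue of `A₀` continues to a simple
eigenvalue `h A` of every operator `A` near `A₀`, with `h` continuously differentiable, and real
when `A` is symmetric. So `λ(x, ε) = ε h(A₀ + ε A₁(x, ε))` is a simple eigenvalue of the family.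
Since `h` is Lipschitz near `A₀`, the outer `ε` together with the `ε` in front of `A₁` makes
`λ - ε h(A₀)` and `∂ₓλ` of order `ε²`, whereas `∂_ελ` contains the bounded term `h(A₀ + ε A₁)`.
-/

open Filter Topology Polynomial

theorem rootMultiplicity_eq_one_iff {R : Type*} [CommRing R] {p : R[X]} {t : R} :
    p.rootMultiplicity t = 1 ↔ p.IsRoot t ∧ ¬ p.derivative.IsRoot t := by
  rcases eq_or_ne p 0 with rfl | hp
  · simp
  have hroot := rootMultiplicity_pos hp (x := t)
  have hmulti := one_lt_rootMultiplicity_iff_isRoot hp (t := t)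
  grind

theorem charpoly_smul {K V : Type*} [Field K] [Infinite K] [AddCommGroup V] [Module K V]
    [FiniteDimensional K V] (c : K) (f : Module.End K V) :
    (c • f).charpoly = f.charpoly.scaleRoots c := by
  rcases eq_or_ne c 0 with rfl | hc
  · simp [f.charpoly_monic.leadingCoeff, LinearMap.charpoly_natDegree]
  refine Polynomial.funext fun z => ?_
  obtain ⟨w, rfl⟩ : ∃ w, z = c * w := ⟨c⁻¹ * z, (mul_inv_cancel_left₀ hc z).symm⟩
  rw [scaleRoots_eval_mul, LinearMap.charpoly_natDegree, LinearMap.eval_charpoly,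
    LinearMap.eval_charpoly, ← LinearMap.det_smul]
  simp [Algebra.algebraMap_eq_smul_one, smul_sub, smul_smul]

theorem rootMultiplicity_charpoly_smul {K V : Type*} [Field K] [Infinite K] [AddCommGroup V]
    [Module K V] [FiniteDimensional K V] {c : K} (hc : c ≠ 0) (f : Module.End K V) (μ : K) :
    (c • f).charpoly.rootMultiplicity (c * μ) = f.charpoly.rootMultiplicity μ := by
  rw [charpoly_smul,
    rootMultiplicity_scaleRoots _ (IsLeftCancelMulZero.mul_left_cancel_of_ne_zero hc)]

theorem exists_contDiffAt_simple_root {𝕜 E : Type*} [RCLike 𝕜] [NormedAddCommGroup E]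
    [NormedSpace 𝕜 E] [CompleteSpace E] {P : E → 𝕜[X]} {x₀ : E} {z₀ : 𝕜}
    (hP : ContDiffAt 𝕜 1 (fun q : E × 𝕜 => (P q.1).eval q.2) (x₀, z₀))
    (hz₀ : (P x₀).rootMultiplicity z₀ = 1) :
    ∃ g : E → 𝕜, g x₀ = z₀ ∧ ContDiffAt 𝕜 1 g x₀ ∧
      ∀ᶠ x in 𝓝 x₀, (P x).rootMultiplicity (g x) = 1 := by
  set f : E × 𝕜 → 𝕜 := fun q => (P q.1).eval q.2
  have hderiv : ∀ᶠ q in 𝓝 (x₀, z₀), fderiv 𝕜 f q (0, 1) = (P q.1).derivative.eval q.2 := by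
    filter_upwards [hP.eventually (by simp)] with q hq
    have hline : HasDerivAt (fun z : 𝕜 => (q.1, z)) ((0, 1) : E × 𝕜) q.2 :=
      (hasDerivAt_const _ _).prodMk (hasDerivAt_id _)
    have hcomp : HasDerivAt (fun z => (P q.1).eval z) (fderiv 𝕜 f q (0, 1)) q.2 :=
      HasFDerivAt.comp_hasDerivAt (f := fun z : 𝕜 => (q.1, z)) q.2
        (hq.differentiableAt one_ne_zero).hasFDerivAt hline
    exact hcomp.unique ((P q.1).hasDerivAt q.2)
  obtain ⟨hroot, hsimple⟩ := rootMultiplicity_eq_one_iff.1 hz₀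
  have hne : fderiv 𝕜 f (x₀, z₀) (0, 1) ≠ 0 := by rwa [hderiv.self_of_nhds]
  have hinv : (fderiv 𝕜 f (x₀, z₀) ∘L .inr 𝕜 E 𝕜).IsInvertible :=
    ⟨ContinuousLinearEquiv.unitsEquivAut 𝕜 (Units.mk0 _ hne), by ext; simp⟩
  set g := hP.implicitFunction one_ne_zero hinv
  have hg₀ : g x₀ = z₀ := hP.implicitFunction_apply_self one_ne_zero hinv
  have hg : ContDiffAt 𝕜 1 g x₀ := hP.contDiffAt_implicitFunction one_ne_zero hinv
  have hgraph : Tendsto (fun x => (x, g x)) (𝓝 x₀) (𝓝 (x₀, z₀)) := by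
    simpa only [id, hg₀] using (continuousAt_id.prodMk hg.continuousAt).tendsto
  have hderiv_ne : ∀ᶠ q in 𝓝 (x₀, z₀), fderiv 𝕜 f q (0, 1) ≠ 0 :=
    ((hP.continuousAt_fderiv one_ne_zero).clm_apply continuousAt_const).eventually_ne hne
  refine ⟨g, hg₀, hg, ?_⟩
  filter_upwards [hP.eventually_apply_implicitFunction one_ne_zero hinv,
    hgraph.eventually (hderiv.and hderiv_ne)] with x hx ⟨hx_deriv, hx_ne⟩
  exact rootMultiplicity_eq_one_iff.2 ⟨hx.trans hroot, hx_deriv.symm.trans_ne hx_ne⟩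

theorem contDiff_matrix_det {𝕜 E n : Type*} [NontriviallyNormedField 𝕜] [NormedAddCommGroup E]
    [NormedSpace 𝕜 E] [Fintype n] [DecidableEq n] {k : WithTop ℕ∞} {M : E → Matrix n n 𝕜}
    (hM : ∀ i j, ContDiff 𝕜 k fun x => M x i j) : ContDiff 𝕜 k fun x => (M x).det := by
  simp only [Matrix.det_apply]
  exact ContDiff.sum fun σ _ => (contDiff_prod fun i _ => hM (σ i) i).const_smul _

theorem contDiff_eval_charpoly {𝕜 V : Type*} [NontriviallyNormedField 𝕜] [CompleteSpace 𝕜]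
    [NormedAddCommGroup V] [NormedSpace 𝕜 V] [FiniteDimensional 𝕜 V] {k : WithTop ℕ∞} :
    ContDiff 𝕜 k fun q : (V →L[𝕜] V) × 𝕜 => (q.1 : V →ₗ[𝕜] V).charpoly.eval q.2 := by
  let b := Module.finBasis 𝕜 V
  simp only [LinearMap.eval_charpoly, ← LinearMap.det_toMatrix b]
  refine contDiff_matrix_det fun i j => ?_
  have hentry : ContDiff 𝕜 k fun q : (V →L[𝕜] V) × 𝕜 =>
      (b.coord i).toContinuousLinearMap (q.2 • b j - q.1 (b j)) := by fun_prop
  simpa [LinearMap.toMatrix_apply, Algebra.algebraMap_eq_smul_one] using hentry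

theorem exists_simple_eigenvalue_branch {V : Type*} [NormedAddCommGroup V]
    [InnerProductSpace ℂ V] [FiniteDimensional ℂ V] {A₀ : V →L[ℂ] V} {a : ℝ}
    (ha : (A₀ : V →ₗ[ℂ] V).charpoly.rootMultiplicity (a : ℂ) = 1) :
    ∃ h : (V →L[ℂ] V) → ℝ, h A₀ = a ∧ ContDiffAt ℝ 1 h A₀ ∧
      ∀ᶠ A : V →L[ℂ] V in 𝓝 A₀, (A : V →ₗ[ℂ] V).IsSymmetric →
        (A : V →ₗ[ℂ] V).charpoly.rootMultiplicity (h A : ℂ) = 1 := by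
  have : CompleteSpace (V →L[ℂ] V) := FiniteDimensional.complete ℂ _
  obtain ⟨g, hg₀, hg, hsimple⟩ := exists_contDiffAt_simple_root
    (P := fun A : V →L[ℂ] V => (A : V →ₗ[ℂ] V).charpoly) contDiff_eval_charpoly.contDiffAt ha
  refine ⟨fun A => (g A).re, by simp [hg₀],
    Complex.reCLM.contDiff.contDiffAt.comp _ (hg.restrict_scalars ℝ), ?_⟩
  filter_upwards [hsimple] with A hA hsymm
  have heigen : Module.End.HasEigenvalue (A : V →ₗ[ℂ] V) (g A) :=
    (Module.End.hasEigenvalue_iff_isRoot_charpoly _ _).2 (rootMultiplicity_eq_one_iff.1 hA).1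
  rwa [Complex.conj_eq_iff_re.1 (hsymm.conj_eigenvalue_eq_self heigen)]

theorem charpoly_toEuclideanCLM {𝕜 n : Type*} [RCLike 𝕜] [Fintype n] [DecidableEq n]
    (M : Matrix n n 𝕜) :
    (Matrix.toEuclideanCLM (𝕜 := 𝕜) M : EuclideanSpace 𝕜 n →ₗ[𝕜] EuclideanSpace 𝕜 n).charpoly
      = M.charpoly := by
  rw [Matrix.coe_toEuclideanCLM_eq_toEuclideanLin, Matrix.toEuclideanLin_eq_toLin_orthonormal,
    Matrix.charpoly_toLin]

theorem isSymmetric_toEuclideanCLM {𝕜 n : Type*} [RCLike 𝕜] [Fintype n] [DecidableEq n]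
    {M : Matrix n n 𝕜} (hM : M.IsHermitian) :
    (Matrix.toEuclideanCLM (𝕜 := 𝕜) M :
      EuclideanSpace 𝕜 n →ₗ[𝕜] EuclideanSpace 𝕜 n).IsSymmetric :=
  Matrix.isSymmetric_toEuclideanLin_iff.2 hM

theorem exists_pos_eventually_contDiffAt_and_norm_le {E G : Type*} [NormedAddCommGroup E]
    [NormedSpace ℝ E] [NormedAddCommGroup G] [NormedSpace ℝ G] {h : E → G} {A₀ : E}
    (hh : ContDiffAt ℝ 1 h A₀) :
    ∃ K > 0, ∀ᶠ A in 𝓝 A₀, ContDiffAt ℝ 1 h A ∧ ‖fderiv ℝ h A‖ ≤ K ∧ ‖h A‖ ≤ K ∧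
      ‖h A - h A₀‖ ≤ K * ‖A - A₀‖ := by
  obtain ⟨L, hL, hLip⟩ := (hh.differentiableAt one_ne_zero).isBigO_sub.exists_pos
  have hfderiv := (hh.continuousAt_fderiv one_ne_zero).norm.eventually_lt_const (lt_add_one _)
  have hval := hh.continuousAt.norm.eventually_lt_const (lt_add_one _)
  refine ⟨max L (max (‖fderiv ℝ h A₀‖ + 1) (‖h A₀‖ + 1)), lt_max_of_lt_left hL, ?_⟩
  filter_upwards [hh.eventually (by simp), hfderiv, hval, hLip.bound] with A hA hA' hA_val hA_Lip
  refine ⟨hA, by grind, by grind, hA_Lip.trans ?_⟩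
  gcongr
  exact le_max_left ..

theorem exists_pos_forall_add_smul_mem {E : Type*} [NormedAddCommGroup E] [NormedSpace ℝ E] {A₀ : E}
    {U : Set E} (hU : U ∈ 𝓝 A₀) (Γ : ℝ) :
    ∃ δ > 0, ∀ ε ∈ Set.Ioo (0 : ℝ) δ, ∀ B : E, ‖B‖ ≤ Γ → A₀ + ε • B ∈ U := by
  obtain ⟨ρ, hρ, hball⟩ := Metric.mem_nhds_iff.1 hU
  refine ⟨ρ / (|Γ| + 1), by positivity, fun ε hε B hB => hball ?_⟩
  rw [mem_ball_iff_norm, add_sub_cancel_left, norm_smul, Real.norm_of_nonneg hε.1.le]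
  calc ε * ‖B‖ ≤ ε * (|Γ| + 1) := by gcongr; exacts [hε.1.le, by grind]
    _ < ρ := (lt_div_iff₀ (by positivity)).1 hε.2

section Rescaled

variable {E G X : Type*} [NormedAddCommGroup E] [NormedSpace ℝ E] [NormedAddCommGroup G]
  [NormedSpace ℝ G]

/-- The function `(x, ε) ↦ ε h(A₀ + ε F(x, ε))`. When `h` is an eigenvalue branch near `A₀`,
homogeneity makes this an eigenvalue of `ε A₀ + ε² F(x, ε)`. -/
def rescaled (h : E → G) (A₀ : E) (F : X × ℝ → E) (p : X × ℝ) : G :=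
  p.2 • h (A₀ + p.2 • F p)

variable {h : E → G} {A₀ : E} {F : X × ℝ → E} {p : X × ℝ} {K : ℝ}

theorem norm_rescaled_sub_le
    (hK : ‖h (A₀ + p.2 • F p) - h A₀‖ ≤ K * ‖p.2 • F p‖) :
    ‖rescaled h A₀ F p - p.2 • h A₀‖ ≤ K * ‖F p‖ * p.2 ^ 2 := by
  rw [rescaled, ← smul_sub, norm_smul, Real.norm_eq_abs]
  calc |p.2| * ‖h (A₀ + p.2 • F p) - h A₀‖ ≤ |p.2| * (K * (|p.2| * ‖F p‖)) := by
        rw [norm_smul, Real.norm_eq_abs] at hK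
        gcongr
    _ = K * ‖F p‖ * p.2 ^ 2 := by rw [← sq_abs p.2]; ring

variable [NormedAddCommGroup X] [NormedSpace ℝ X]

theorem contDiffAt_rescaled {n : WithTop ℕ∞} (hF : ContDiffAt ℝ n F p)
    (hh : ContDiffAt ℝ n h (A₀ + p.2 • F p)) : ContDiffAt ℝ n (rescaled h A₀ F) p :=
  contDiffAt_snd.smul (hh.comp p (contDiffAt_const.add (contDiffAt_snd.smul hF)))

theorem fderiv_rescaled_apply (hF : DifferentiableAt ℝ F p)
    (hh : DifferentiableAt ℝ h (A₀ + p.2 • F p)) (v : X × ℝ) :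
    fderiv ℝ (rescaled h A₀ F) p v =
      p.2 • fderiv ℝ h (A₀ + p.2 • F p) (p.2 • fderiv ℝ F p v + v.2 • F p)
        + v.2 • h (A₀ + p.2 • F p) := by
  have hinner : HasFDerivAt (fun q : X × ℝ => A₀ + q.2 • F q) _ p :=
    (hasFDerivAt_snd.smul hF.hasFDerivAt).const_add A₀
  have houter : HasFDerivAt (rescaled h A₀ F) _ p :=
    hasFDerivAt_snd.smul (hh.hasFDerivAt.comp p hinner)
  simp [houter.fderiv]

theorem norm_fderiv_rescaled_le (hF : DifferentiableAt ℝ F p)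
    (hh : DifferentiableAt ℝ h (A₀ + p.2 • F p)) (v : X × ℝ) :
    ‖fderiv ℝ (rescaled h A₀ F) p v‖ ≤
      |p.2| * (‖fderiv ℝ h (A₀ + p.2 • F p)‖ * (|p.2| * ‖fderiv ℝ F p v‖ + |v.2| * ‖F p‖))
        + |v.2| * ‖h (A₀ + p.2 • F p)‖ := by
  rw [fderiv_rescaled_apply hF hh]
  refine (norm_add_le _ _).trans ?_
  simp only [norm_smul, Real.norm_eq_abs]
  gcongr
  refine (ContinuousLinearMap.le_opNorm _ _).trans ?_
  gcongr
  exact (norm_add_le _ _).trans (by simp only [norm_smul, Real.norm_eq_abs, le_refl])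

theorem exists_forall_rescaled_estimates {U : Set E} (hh : ContDiffAt ℝ 1 h A₀)
    (hU : U ∈ 𝓝 A₀) {ε' Γ : ℝ} (hε' : 0 < ε')
    (hF : ContDiffOn ℝ 1 F (Set.univ ×ˢ Set.Ioc 0 ε')) {w : X}
    (hbd : ∀ p ∈ (Set.univ ×ˢ Set.Ioc 0 ε' : Set (X × ℝ)), ‖F p‖ ≤ Γ ∧
      ‖fderivWithin ℝ F (Set.univ ×ˢ Set.Ioc 0 ε') p (w, 0)‖ ≤ Γ ∧
      ‖fderivWithin ℝ F (Set.univ ×ˢ Set.Ioc 0 ε') p (0, 1)‖ ≤ Γ) :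
    ∃ C εbar : ℝ, 0 < C ∧ 0 < εbar ∧ εbar ≤ ε' ∧
      ∀ p ∈ (Set.univ ×ˢ Set.Ioo 0 εbar : Set (X × ℝ)), A₀ + p.2 • F p ∈ U ∧
        ContDiffAt ℝ 1 (rescaled h A₀ F) p ∧
        ‖rescaled h A₀ F p - p.2 • h A₀‖ ≤ C * p.2 ^ 2 ∧
        ‖fderiv ℝ (rescaled h A₀ F) p (w, 0)‖ ≤ C * p.2 ^ 2 ∧
        ‖fderiv ℝ (rescaled h A₀ F) p (0, 1)‖ ≤ C := by
  obtain ⟨K, hK, hev⟩ := exists_pos_eventually_contDiffAt_and_norm_le hh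
  obtain ⟨δ, hδ, hmem⟩ := exists_pos_forall_add_smul_mem (inter_mem hev hU) Γ
  have hΓ : 0 ≤ Γ := (norm_nonneg _).trans (hbd (0, ε') ⟨trivial, hε', le_rfl⟩).1
  refine ⟨K * (2 * Γ + 1), min ε' (min 1 δ), by positivity, by positivity, min_le_left _ _, ?_⟩
  rintro p ⟨-, hp_pos, hp_lt⟩
  obtain ⟨hp_lt', hp_one, hp_δ⟩ : p.2 < ε' ∧ p.2 < 1 ∧ p.2 < δ := by simpa using hp_lt
  obtain ⟨hFp, hFx, hFε⟩ := hbd p ⟨trivial, hp_pos, hp_lt'.le⟩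
  obtain ⟨⟨hhp, hfderiv, hval, hLip⟩, hpU⟩ := hmem p.2 ⟨hp_pos, hp_δ⟩ (F p) hFp
  have hnhds : (Set.univ ×ˢ Set.Ioc 0 ε' : Set (X × ℝ)) ∈ 𝓝 p :=
    prod_mem_nhds univ_mem (Ioc_mem_nhds hp_pos hp_lt')
  rw [fderivWithin_of_mem_nhds hnhds] at hFx hFε
  rw [add_sub_cancel_left] at hLip
  have hFdiff := hF.contDiffAt hnhds
  have hle := norm_fderiv_rescaled_le (hFdiff.differentiableAt one_ne_zero)
    (hhp.differentiableAt one_ne_zero)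
  refine ⟨hpU, contDiffAt_rescaled hFdiff hhp, (norm_rescaled_sub_le hLip).trans ?_,
    (hle _).trans ?_, (hle _).trans ?_⟩
  · gcongr
    linarith
  · calc _ ≤ p.2 * (K * (p.2 * Γ)) := by
          simp only [abs_zero, zero_mul, add_zero, abs_of_pos hp_pos]
          gcongr
      _ = K * Γ * p.2 ^ 2 := by ring
      _ ≤ K * (2 * Γ + 1) * p.2 ^ 2 := by gcongr; linarith
  · calc _ ≤ 1 * (K * (1 * Γ + 1 * Γ)) + 1 * K := by
          simp only [abs_one, abs_of_pos hp_pos]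
          gcongr
      _ = K * (2 * Γ + 1) := by ring

end Rescaled

theorem count_replicate_add_sum_singleton {α ι : Type*} [DecidableEq α] [Fintype ι] {a : ι → α}
    (ha : Function.Injective a) {b : α} (hb : ∀ j, a j ≠ b) (r : ℕ) (j : ι) :
    Multiset.count (a j) (Multiset.replicate r b + ∑ i, ({a i} : Multiset α)) = 1 := by
  classical
  simp [Multiset.count_sum', Multiset.count_singleton, Multiset.count_replicate, (hb j).symm,
    ha.eq_iff]

theorem rootMultiplicity_charpoly_smul_add_sq_smul {V : Type*} [NormedAddCommGroup V]
    [NormedSpace ℂ V] [FiniteDimensional ℂ V] (A B : V →L[ℂ] V) {ε : ℝ} (hε : ε ≠ 0) (μ : ℝ) :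
    (((ε : ℂ) • A + (ε : ℂ) ^ 2 • B : V →L[ℂ] V) : V →ₗ[ℂ] V).charpoly.rootMultiplicity
        ((ε * μ : ℝ) : ℂ) =
      ((A + ε • B : V →L[ℂ] V) : V →ₗ[ℂ] V).charpoly.rootMultiplicity (μ : ℂ) := by
  have hfactor : (((ε : ℂ) • A + (ε : ℂ) ^ 2 • B : V →L[ℂ] V) : V →ₗ[ℂ] V) =
      (ε : ℂ) • ((A + ε • B : V →L[ℂ] V) : V →ₗ[ℂ] V) := by
    ext v
    simp only [ContinuousLinearMap.coe_coe, add_apply, smul_apply, LinearMap.smul_apply]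
    module
  rw [hfactor, Complex.ofReal_mul, rootMultiplicity_charpoly_smul (Complex.ofReal_ne_zero.2 hε)]

theorem hermitian_family_simple_eigenvalue_branches_general {V ι X : Type*}
    [NormedAddCommGroup V] [InnerProductSpace ℂ V] [FiniteDimensional ℂ V] [Finite ι]
    [NormedAddCommGroup X] [NormedSpace ℝ X] {A₀ : V →L[ℂ] V}
    (hA₀ : (A₀ : V →ₗ[ℂ] V).IsSymmetric) {a : ι → ℝ}
    (ha : ∀ j, (A₀ : V →ₗ[ℂ] V).charpoly.rootMultiplicity (a j : ℂ) = 1)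
    {Γ ε' : ℝ} (hε' : 0 < ε') {A₁ : X → ℝ → V →L[ℂ] V}
    (hA₁ : ∀ x, ∀ ε ∈ Set.Ioc 0 ε', (A₁ x ε : V →ₗ[ℂ] V).IsSymmetric)
    (hC1 : ContDiffOn ℝ 1 (fun p : X × ℝ => A₁ p.1 p.2) (Set.univ ×ˢ Set.Ioc 0 ε'))
    {w : X} (hbd : ∀ p ∈ (Set.univ ×ˢ Set.Ioc 0 ε' : Set (X × ℝ)), ‖A₁ p.1 p.2‖ ≤ Γ ∧
      ‖fderivWithin ℝ (fun q : X × ℝ => A₁ q.1 q.2) (Set.univ ×ˢ Set.Ioc 0 ε') p (w, 0)‖ ≤ Γ ∧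
      ‖fderivWithin ℝ (fun q : X × ℝ => A₁ q.1 q.2) (Set.univ ×ˢ Set.Ioc 0 ε') p (0, 1)‖ ≤ Γ) :
    ∃ C εbar : ℝ, 0 < C ∧ 0 < εbar ∧ εbar ≤ ε' ∧
      ∃ lam : ι → X → ℝ → ℝ,
        ∀ j,
          ContDiffOn ℝ 1 (fun p : X × ℝ => lam j p.1 p.2) (Set.univ ×ˢ Set.Ioo 0 εbar) ∧
          ∀ x, ∀ ε ∈ Set.Ioo 0 εbar,
            (((ε : ℂ) • A₀ + (ε : ℂ) ^ 2 • A₁ x ε : V →L[ℂ] V) :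
              V →ₗ[ℂ] V).charpoly.rootMultiplicity (lam j x ε : ℂ) = 1 ∧
            |lam j x ε - ε * a j| ≤ C * ε ^ 2 ∧
            |fderiv ℝ (fun q : X × ℝ => lam j q.1 q.2) (x, ε) (w, 0)| ≤ C * ε ^ 2 ∧
            |fderiv ℝ (fun q : X × ℝ => lam j q.1 q.2) (x, ε) (0, 1)| ≤ C := by
  have := Fintype.ofFinite ι
  choose h hh₀ hh hsimple using fun j => exists_simple_eigenvalue_branch (ha j)
  obtain ⟨C, εbar, hC, hεbar, hle, hest⟩ := exists_forall_rescaled_estimates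
    (h := fun A j => h j A) (contDiffAt_pi.2 hh) (eventually_all.2 hsimple) hε' hC1 hbd
  set lam := rescaled (fun A j => h j A) A₀ fun p : X × ℝ => A₁ p.1 p.2
  refine ⟨C, εbar, hC, hεbar, hle, fun j x ε => lam (x, ε) j, fun j => ⟨fun p hp =>
    (contDiffAt_pi.1 (hest p hp).2.1 j).contDiffWithinAt, fun x ε hε => ?_⟩⟩
  obtain ⟨hroot, hdiff, hval, hx, hε_deriv⟩ := hest (x, ε) ⟨trivial, hε⟩
  have hfderiv (v : X × ℝ) : fderiv ℝ (fun q => lam q j) (x, ε) v = fderiv ℝ lam (x, ε) v j := by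
    rw [fderiv_apply (hdiff.differentiableAt one_ne_zero)]; rfl
  simp only [Prod.mk.eta, hfderiv, ← Real.norm_eq_abs]
  refine ⟨?_, ?_, (norm_le_pi_norm _ j).trans hx, (norm_le_pi_norm _ j).trans hε_deriv⟩
  · exact (rootMultiplicity_charpoly_smul_add_sq_smul _ _ hε.1.ne' _).trans <| hroot j <|
      hA₀.add ((hA₁ x ε ⟨hε.1, hε.2.le.trans hle⟩).smul (Complex.conj_ofReal ε))
  · simpa [hh₀] using (norm_le_pi_norm _ j).trans hval

/-- Item (II)(ii) of Appendix A4: given a `C¹` family `(x, ε) ↦ M₁(x, ε)` of Hermitian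
matrices with `‖M₁‖, ‖∂ₓM₁‖, ‖∂_εM₁‖ ≤ Γ`, the `s` simple eigenvalues of
`ε M̂ + ε² M₁(x, ε)` near `ε a_j` are `C¹` functions `λ_j(x, ε)` with
`|λ_j − ε a_j| ≤ Cε²`, `|∂ₓλ_j| ≤ Cε²` and `|∂_ελ_j| ≤ C`. -/
theorem hermitian_family_simple_eigenvalue_branches
    (r s d : ℕ) (hr : 1 ≤ r) (hs : 1 ≤ s) (hd : d = r + s)
    (Mhat : Matrix (Fin d) (Fin d) ℂ) (hMhat : Mhat.IsHermitian)
    (a : Fin s → ℝ) (hmono : StrictMono a) (hpos : ∀ j, 0 < a j)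
    (hroots : Mhat.charpoly.roots
      = Multiset.replicate r 0 + ∑ j, ({((a j : ℝ) : ℂ)} : Multiset ℂ))
    (Γ : ℝ) (hΓ : 0 < Γ) (ε' : ℝ) (hε' : 0 < ε')
    (M₁ : ℝ → ℝ → Matrix (Fin d) (Fin d) ℂ)
    (hherm : ∀ x ε, (M₁ x ε).IsHermitian)
    (hC1 : ContDiffOn ℝ 1
      (fun p : ℝ × ℝ => Matrix.toEuclideanCLM (𝕜 := ℂ) (M₁ p.1 p.2))
      (Set.univ ×ˢ Set.Ioc 0 ε'))
    (hbd : ∀ p ∈ (Set.univ ×ˢ Set.Ioc 0 ε' : Set (ℝ × ℝ)),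
      ‖Matrix.toEuclideanCLM (𝕜 := ℂ) (M₁ p.1 p.2)‖ ≤ Γ ∧
      ‖fderivWithin ℝ (fun q : ℝ × ℝ => Matrix.toEuclideanCLM (𝕜 := ℂ) (M₁ q.1 q.2))
          (Set.univ ×ˢ Set.Ioc 0 ε') p (1, 0)‖ ≤ Γ ∧
      ‖fderivWithin ℝ (fun q : ℝ × ℝ => Matrix.toEuclideanCLM (𝕜 := ℂ) (M₁ q.1 q.2))
          (Set.univ ×ˢ Set.Ioc 0 ε') p (0, 1)‖ ≤ Γ) :
    ∃ C εbar : ℝ, 0 < C ∧ 0 < εbar ∧ εbar ≤ ε' ∧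
      ∃ lam : Fin s → ℝ → ℝ → ℝ,
        ∀ j : Fin s,
          ContDiffOn ℝ 1 (fun p : ℝ × ℝ => lam j p.1 p.2)
            (Set.univ ×ˢ Set.Ioo 0 εbar) ∧
          ∀ x ε : ℝ, ε ∈ Set.Ioo (0 : ℝ) εbar →
            Multiset.count ((lam j x ε : ℝ) : ℂ)
                (((ε : ℂ) • Mhat + (ε : ℂ) ^ 2 • M₁ x ε).charpoly.roots) = 1 ∧
            |lam j x ε - ε * a j| ≤ C * ε ^ 2 ∧
            |fderiv ℝ (fun q : ℝ × ℝ => lam j q.1 q.2) (x, ε) (1, 0)| ≤ C * ε ^ 2 ∧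
            |fderiv ℝ (fun q : ℝ × ℝ => lam j q.1 q.2) (x, ε) (0, 1)| ≤ C := by
  have hsimple (j : Fin s) : Mhat.charpoly.rootMultiplicity (a j : ℂ) = 1 := by
    rw [← count_roots, hroots]
    exact count_replicate_add_sum_singleton (a := fun j => (a j : ℂ))
      (Complex.ofReal_injective.comp hmono.injective)
      (fun j => Complex.ofReal_ne_zero.2 (hpos j).ne') r j
  simpa only [← charpoly_toEuclideanCLM, map_add, map_smul, count_roots] using
    hermitian_family_simple_eigenvalue_branches_general
      (A₁ := fun x ε => Matrix.toEuclideanCLM (𝕜 := ℂ) (M₁ x ε))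
      (isSymmetric_toEuclideanCLM hMhat)
      (fun j => (charpoly_toEuclideanCLM Mhat).symm ▸ hsimple j) hε'
      (fun x ε _ => isSymmetric_toEuclideanCLM (hherm x ε)) hC1 hbd
end

section
/- Let d = r + s with r, s ≥ 1, let A be an s×s Hermitian matrix with simple eigenvalues 0 < a₁ < ⋯ < a_s, and let Γ > 0. Then there exist C > 0 and ε̄ > 0 such that the following holds for all ε ∈ (0, ε̄) and all x ∈ ℝ with |x| ≤ 1: if N is an r×r Hermitian matrix, Q is an s×s Hermitian matrix and P is an r×s complex matrix, all of operator norm at most Γ, and M is the d×d Hermitian matrix with block form M = [[ε² x² N, ε² x P], [ε² x P*, ε A + ε² Q]] relative to the decomposition ℂ^d = ℂ^r ⊕ ℂ^s, then at least r eigenvalues of M, counted with multiplicity, lie in the interval [−C ε² x², C ε² x²]. -/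
/-!
Let `V = [1; -D⁻¹C]`, whose columns span an `m`-dimensional space. Block elimination gives
`[[E, B], [C, D]] V = [S; 0]` with `S = E - B D⁻¹ C` the Schur complement, and `‖u‖ ≤ ‖V u‖`, so the
block matrix sends each `v` in the range of `V` to a vector of norm at most `‖S‖ ‖v‖`. A Hermitian
matrix with this property has at least `m` eigenvalues in `[-‖S‖, ‖S‖]`: otherwise the range of `V`
would contain a nonzero vector orthogonal to all the corresponding eigenvectors, and such a vector
is stretched by more than `‖S‖`. For `D = ε (A + ε Q)` and the other blocks of the theorem,
`S = ε² x² (N - ε P (A + ε Q)⁻¹ P*)`, whose second factor stays bounded as `ε → 0`.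
-/

section EigenvectorBasis

variable {𝕜 E ι : Type*} [RCLike 𝕜] [NormedAddCommGroup E] [InnerProductSpace 𝕜 E] [Fintype ι]
  (b : OrthonormalBasis ι 𝕜 E) {T : E →ₗ[𝕜] E} {μ : ι → 𝕜} {δ : ℝ}

lemma inner_apply_of_eigenvectorBasis (hT : ∀ i, T (b i) = μ i • b i) (v : E) (i : ι) :
    inner 𝕜 (b i) (T v) = μ i * inner 𝕜 (b i) v := by
  classical
  conv_lhs => rw [← b.sum_repr' v]
  simp [hT, inner_sum, inner_smul_right, b.inner_eq_ite, mul_comm]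

lemma mul_norm_lt_norm_apply_of_eigenvectorBasis (hT : ∀ i, T (b i) = μ i • b i) (hδ : 0 ≤ δ)
    {v : E} (hv : v ≠ 0) (horth : ∀ i, ‖μ i‖ ≤ δ → inner 𝕜 (b i) v = 0) :
    δ * ‖v‖ < ‖T v‖ := by
  obtain ⟨k, hk⟩ : ∃ k, inner 𝕜 (b k) v ≠ 0 := by
    by_contra! hzero
    exact hv (InnerProductSpace.ext_inner_left_basis b.toBasis fun i => by simp [hzero])
  have hlarge : ∀ i, inner 𝕜 (b i) v ≠ 0 → δ < ‖μ i‖ := fun i hi =>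
    lt_of_not_ge fun hle => hi (horth i hle)
  refine lt_of_pow_lt_pow_left₀ 2 (norm_nonneg _) ?_
  calc (δ * ‖v‖) ^ 2 = ∑ i, δ ^ 2 * ‖inner 𝕜 (b i) v‖ ^ 2 := by
        rw [mul_pow, ← b.sum_sq_norm_inner_right v, Finset.mul_sum]
    _ < ∑ i, ‖μ i‖ ^ 2 * ‖inner 𝕜 (b i) v‖ ^ 2 := by
        refine Finset.sum_lt_sum (fun i _ => ?_) ⟨k, Finset.mem_univ k, ?_⟩
        · obtain hi | hi := eq_or_ne (inner 𝕜 (b i) v) 0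
          · simp [hi]
          · gcongr
            exact (hlarge i hi).le
        · gcongr
          exact hlarge k hk
    _ = ‖T v‖ ^ 2 := by
        simp only [← b.sum_sq_norm_inner_right (T v), inner_apply_of_eigenvectorBasis b hT,
          norm_mul, mul_pow]

lemma finrank_le_card_norm_eigenvalue_le (hT : ∀ i, T (b i) = μ i • b i) (hδ : 0 ≤ δ)
    (W : Submodule 𝕜 E) (hW : ∀ v ∈ W, ‖T v‖ ≤ δ * ‖v‖) :
    Module.finrank 𝕜 W ≤ (Finset.univ.filter fun i => ‖μ i‖ ≤ δ).card := by
  have : FiniteDimensional 𝕜 E := b.toBasis.finiteDimensional_of_finite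
  by_contra! hlt
  let coords : W →ₗ[𝕜] ({i // ‖μ i‖ ≤ δ} → 𝕜) :=
    LinearMap.pi fun i => (innerₛₗ 𝕜 (b i)).domRestrict W
  have hker : LinearMap.ker coords ≠ ⊥ :=
    LinearMap.ker_ne_bot_of_finrank_lt (by simpa [Fintype.card_subtype] using hlt)
  obtain ⟨v, hv, hv0⟩ := Submodule.exists_mem_ne_zero_of_ne_bot hker
  refine (hW v v.2).not_gt (mul_norm_lt_norm_apply_of_eigenvectorBasis b hT hδ ?_ fun i hi => ?_)
  · simpa using hv0
  · exact congrFun (LinearMap.mem_ker.1 hv) ⟨i, hi⟩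

end EigenvectorBasis

section NormedRing

variable {R : Type*} [NormedRing R] (a : Rˣ)

lemma isUnit_of_norm_inv_mul_norm_sub_lt_one [HasSummableGeomSeries R] {b : R}
    (h : ‖(↑a⁻¹ : R)‖ * ‖b - a‖ < 1) : IsUnit b := by
  have hsmall : ‖(↑a⁻¹ : R) * (a - b)‖ < 1 :=
    (norm_mul_le _ _).trans_lt (by rwa [norm_sub_rev])
  have hb : b = a * (1 - ↑a⁻¹ * (a - b)) := by simp [mul_sub]
  rw [hb]
  exact a.isUnit.mul (isUnit_one_sub_of_norm_lt_one hsmall)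

lemma norm_inv_le_two_mul_of_norm_inv_mul_norm_sub_le_half (b : Rˣ)
    (h : ‖(↑a⁻¹ : R)‖ * ‖(b - a : R)‖ ≤ 1 / 2) : ‖(↑b⁻¹ : R)‖ ≤ 2 * ‖(↑a⁻¹ : R)‖ := by
  have hresolvent : (↑b⁻¹ : R) = ↑a⁻¹ - ↑a⁻¹ * (b - a) * ↑b⁻¹ := by
    simp [mul_sub, sub_mul, mul_assoc]
  have hnorm : ‖(↑b⁻¹ : R)‖ ≤ ‖(↑a⁻¹ : R)‖ + 1 / 2 * ‖(↑b⁻¹ : R)‖ := by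
    calc ‖(↑b⁻¹ : R)‖ = ‖(↑a⁻¹ : R) - ↑a⁻¹ * (b - a) * ↑b⁻¹‖ := congrArg norm hresolvent
      _ ≤ ‖(↑a⁻¹ : R)‖ + ‖(↑a⁻¹ : R)‖ * ‖(b - a : R)‖ * ‖(↑b⁻¹ : R)‖ :=
        (norm_sub_le _ _).trans (by gcongr; exact norm_mul₃_le)
      _ ≤ ‖(↑a⁻¹ : R)‖ + 1 / 2 * ‖(↑b⁻¹ : R)‖ := by gcongr
  linarith

end NormedRing

section Matrix

open Matrix
open scoped Matrix.Norms.L2Operator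

lemma isUnit_of_zero_notMem_roots_charpoly {K n : Type*} [Field K] [Fintype n] [DecidableEq n]
    {A : Matrix n n K} (h : (0 : K) ∉ A.charpoly.roots) : IsUnit A := by
  rwa [Polynomial.mem_roots A.charpoly_monic.ne_zero, ← mem_spectrum_iff_isRoot_charpoly,
    spectrum.zero_notMem_iff] at h

lemma fromBlocks_mulVec_sumElim_neg_inv_mulVec {K m n : Type*} [CommRing K] [Fintype m]
    [Fintype n] [DecidableEq n] (A : Matrix m m K) (B : Matrix m n K) (C : Matrix n m K)
    {D : Matrix n n K} (hD : IsUnit D) (u : m → K) :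
    fromBlocks A B C D *ᵥ Sum.elim u (-(D⁻¹ * C) *ᵥ u) =
      Sum.elim ((A - B * D⁻¹ * C) *ᵥ u) 0 := by
  have hDinv : D * (D⁻¹ * C) = C :=
    mul_nonsing_inv_cancel_left D C ((isUnit_iff_isUnit_det D).1 hD)
  rw [fromBlocks_mulVec, Sum.elim_comp_inl, Sum.elim_comp_inr, mulVec_mulVec, mulVec_mulVec,
    ← add_mulVec, ← add_mulVec]
  simp [hDinv, Matrix.mul_assoc, sub_eq_add_neg]

lemma schurComplement_smul {K m n : Type*} [Field K] [Fintype n] [DecidableEq n]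
    (N : Matrix m m K) (P : Matrix m n K) (R : Matrix n m K) {D : Matrix n n K} {ε : K} (x : K)
    (hε : ε ≠ 0) (hD : IsUnit D) :
    (ε ^ 2 * x ^ 2) • N - ((ε ^ 2 * x) • P) * (ε • D)⁻¹ * ((ε ^ 2 * x) • R) =
      (ε ^ 2 * x ^ 2) • (N - ε • (P * D⁻¹ * R)) := by
  have hinv : (ε • D)⁻¹ = ε⁻¹ • D⁻¹ :=
    Matrix.inv_smul' D (Units.mk0 ε hε) ((isUnit_iff_isUnit_det D).1 hD)
  have hscalar : ε ^ 2 * x * (ε⁻¹ * (ε ^ 2 * x)) = ε ^ 2 * x ^ 2 * ε := by field_simp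
  simp only [hinv, Matrix.smul_mul, Matrix.mul_smul, smul_smul, smul_sub, hscalar]

variable {𝕜 m n : Type*} [RCLike 𝕜] [Fintype m] [Fintype n]

lemma norm_toLp_sumElim_sq (u : m → 𝕜) (w : n → 𝕜) :
    ‖WithLp.toLp 2 (Sum.elim u w)‖ ^ 2 = ‖WithLp.toLp 2 u‖ ^ 2 + ‖WithLp.toLp 2 w‖ ^ 2 := by
  simp [EuclideanSpace.norm_sq_eq]

variable [DecidableEq n]

lemma card_le_card_abs_eigenvalues_le {M : Matrix n n 𝕜} (hM : M.IsHermitian) {δ : ℝ}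
    (hδ : 0 ≤ δ) (V : Matrix n m 𝕜) (hV : Function.Injective V.mulVec)
    (h : ∀ u, ‖WithLp.toLp 2 (M *ᵥ V *ᵥ u)‖ ≤ δ * ‖WithLp.toLp 2 (V *ᵥ u)‖) :
    Fintype.card m ≤ (Finset.univ.filter fun k => |hM.eigenvalues k| ≤ δ).card := by
  classical
  have heigen (k : n) : toEuclideanLin M (hM.eigenvectorBasis k) =
      (hM.eigenvalues k : 𝕜) • hM.eigenvectorBasis k := by
    rw [← RCLike.real_smul_eq_coe_smul]
    exact WithLp.ofLp_injective _ (hM.mulVec_eigenvectorBasis k)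
  have hinj : Function.Injective (toEuclideanLin V) := fun u w huw =>
    WithLp.ofLp_injective _ (hV (congrArg WithLp.ofLp huw))
  have hcount := finrank_le_card_norm_eigenvalue_le hM.eigenvectorBasis heigen hδ
    (LinearMap.range (toEuclideanLin V)) (by rintro _ ⟨u, rfl⟩; exact h u.ofLp)
  simpa [LinearMap.finrank_range_of_inj hinj] using hcount

lemma isUnit_add_of_norm_inv_mul_norm_le_half {A E : Matrix n n 𝕜} (hA : IsUnit A)
    (h : ‖A⁻¹‖ * ‖E‖ ≤ 1 / 2) : IsUnit (A + E) := by
  obtain ⟨a, rfl⟩ := hA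
  refine isUnit_of_norm_inv_mul_norm_sub_lt_one a ?_
  rw [add_sub_cancel_left, coe_units_inv]
  linarith

lemma norm_inv_add_le_two_mul {A E : Matrix n n 𝕜} (hA : IsUnit A)
    (h : ‖A⁻¹‖ * ‖E‖ ≤ 1 / 2) : ‖(A + E)⁻¹‖ ≤ 2 * ‖A⁻¹‖ := by
  obtain ⟨b, hb⟩ := isUnit_add_of_norm_inv_mul_norm_le_half hA h
  obtain ⟨a, rfl⟩ := hA
  rw [← hb, ← coe_units_inv, ← coe_units_inv]
  refine norm_inv_le_two_mul_of_norm_inv_mul_norm_sub_le_half a b ?_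
  rwa [hb, add_sub_cancel_left, coe_units_inv]

variable [DecidableEq m]

lemma card_le_card_abs_eigenvalues_fromBlocks_le {A : Matrix m m 𝕜} {B : Matrix m n 𝕜}
    {C : Matrix n m 𝕜} {D : Matrix n n 𝕜} (hM : (fromBlocks A B C D).IsHermitian)
    (hD : IsUnit D) {δ : ℝ} (hδ : ‖A - B * D⁻¹ * C‖ ≤ δ) :
    Fintype.card m ≤ (Finset.univ.filter fun k => |hM.eigenvalues k| ≤ δ).card := by
  set S := A - B * D⁻¹ * C
  have hδ0 : 0 ≤ δ := (norm_nonneg S).trans hδ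
  have hV (u : m → 𝕜) : fromRows 1 (-(D⁻¹ * C)) *ᵥ u = Sum.elim u (-(D⁻¹ * C) *ᵥ u) := by
    rw [fromRows_mulVec, one_mulVec]
  refine card_le_card_abs_eigenvalues_le hM hδ0 (fromRows 1 (-(D⁻¹ * C)))
    (fun u w huw => ?_) fun u => ?_
  · simp only [hV] at huw
    exact (Sum.elim_eq_iff.1 huw).1
  · rw [hV, fromBlocks_mulVec_sumElim_neg_inv_mulVec A B C hD]
    calc ‖WithLp.toLp 2 (Sum.elim (S *ᵥ u) (0 : n → 𝕜))‖ = ‖WithLp.toLp 2 (S *ᵥ u)‖ :=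
          (sq_eq_sq₀ (norm_nonneg _) (norm_nonneg _)).1 (by simp [norm_toLp_sumElim_sq])
      _ ≤ ‖S‖ * ‖WithLp.toLp 2 u‖ := l2_opNorm_mulVec S (WithLp.toLp 2 u)
      _ ≤ δ * ‖WithLp.toLp 2 (Sum.elim u (-(D⁻¹ * C) *ᵥ u))‖ := by
          have hu : ‖WithLp.toLp 2 u‖ ≤ ‖WithLp.toLp 2 (Sum.elim u (-(D⁻¹ * C) *ᵥ u))‖ :=
            (sq_le_sq₀ (norm_nonneg _) (norm_nonneg _)).1 (by simp [norm_toLp_sumElim_sq])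
          exact mul_le_mul hδ hu (norm_nonneg _) hδ0

lemma norm_sub_smul_mul_mul_conjTranspose_le_two_mul {N : Matrix m m 𝕜} {P : Matrix m n 𝕜}
    {K : Matrix n n 𝕜} {c : 𝕜} {Γ : ℝ} (hN : ‖N‖ ≤ Γ) (hP : ‖P‖ ≤ Γ)
    (hK : ‖c‖ * (Γ * ‖K‖) ≤ 1) : ‖N - c • (P * K * Pᴴ)‖ ≤ 2 * Γ := by
  have hΓ : 0 ≤ Γ := (norm_nonneg P).trans hP
  have hPKP : ‖P * K * Pᴴ‖ ≤ Γ * (Γ * ‖K‖) :=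
    calc ‖P * K * Pᴴ‖ ≤ ‖P‖ * ‖K‖ * ‖Pᴴ‖ :=
          (l2_opNorm_mul _ _).trans (by gcongr; exact l2_opNorm_mul P K)
      _ = ‖P‖ * (‖P‖ * ‖K‖) := by rw [l2_opNorm_conjTranspose]; ring
      _ ≤ Γ * (Γ * ‖K‖) := by gcongr
  calc ‖N - c • (P * K * Pᴴ)‖ ≤ ‖N‖ + ‖c‖ * ‖P * K * Pᴴ‖ :=
        (norm_sub_le _ _).trans_eq (by rw [norm_smul])
    _ ≤ Γ + ‖c‖ * (Γ * (Γ * ‖K‖)) := by gcongr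
    _ = Γ + Γ * (‖c‖ * (Γ * ‖K‖)) := by ring
    _ ≤ Γ + Γ * 1 := by gcongr
    _ = 2 * Γ := by ring

theorem block_matrix_small_eigenvalues_general {A : Matrix n n 𝕜} (hA : IsUnit A) {Γ : ℝ}
    (hΓ : 0 < Γ) :
    ∃ C εbar : ℝ, 0 < C ∧ 0 < εbar ∧
      ∀ ε x : ℝ, ε ∈ Set.Ioo (0 : ℝ) εbar →
      ∀ (N : Matrix m m 𝕜) (Q : Matrix n n 𝕜) (P : Matrix m n 𝕜),
        ‖N‖ ≤ Γ → ‖Q‖ ≤ Γ → ‖P‖ ≤ Γ →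
        ∀ hM : (fromBlocks
            (((ε ^ 2 * x ^ 2 : ℝ) : 𝕜) • N) (((ε ^ 2 * x : ℝ) : 𝕜) • P)
            (((ε ^ 2 * x : ℝ) : 𝕜) • Pᴴ)
            ((ε : 𝕜) • A + ((ε ^ 2 : ℝ) : 𝕜) • Q)).IsHermitian,
          Fintype.card m ≤ (Finset.univ.filter fun k : m ⊕ n =>
            -(C * ε ^ 2 * x ^ 2) ≤ hM.eigenvalues k ∧
              hM.eigenvalues k ≤ C * ε ^ 2 * x ^ 2).card := by
  refine ⟨2 * Γ, 1 / (2 * Γ * ‖A⁻¹‖ + 1), by positivity, by positivity, ?_⟩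
  rintro ε x ⟨hε, hεbar⟩ N Q P hN hQ hP hM
  have hεΓ : ε * (2 * Γ * ‖A⁻¹‖) ≤ 1 := by
    rw [lt_div_iff₀ (by positivity)] at hεbar
    linarith
  have hε0 : (ε : 𝕜) ≠ 0 := RCLike.ofReal_ne_zero.2 hε.ne'
  have hεQ : ‖A⁻¹‖ * ‖(ε : 𝕜) • Q‖ ≤ 1 / 2 := by
    rw [norm_smul, RCLike.norm_of_nonneg hε.le]
    calc ‖A⁻¹‖ * (ε * ‖Q‖) ≤ ‖A⁻¹‖ * (ε * Γ) := by gcongr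
      _ ≤ 1 / 2 := by linarith
  have hD : IsUnit (A + (ε : 𝕜) • Q) := isUnit_add_of_norm_inv_mul_norm_le_half hA hεQ
  have hfactor : (ε : 𝕜) • A + ((ε ^ 2 : ℝ) : 𝕜) • Q = (ε : 𝕜) • (A + (ε : 𝕜) • Q) := by
    rw [smul_add, smul_smul, ← RCLike.ofReal_mul, ← sq]
  have hinv : ‖(ε : 𝕜)‖ * (Γ * ‖(A + (ε : 𝕜) • Q)⁻¹‖) ≤ 1 := by
    rw [RCLike.norm_of_nonneg hε.le]
    calc ε * (Γ * ‖(A + (ε : 𝕜) • Q)⁻¹‖) ≤ ε * (Γ * (2 * ‖A⁻¹‖)) := by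
          gcongr
          exact norm_inv_add_le_two_mul hA hεQ
      _ ≤ 1 := by linarith
  simp only [← abs_le]
  refine card_le_card_abs_eigenvalues_fromBlocks_le hM ?_ ?_
  · rw [hfactor]
    exact hD.smul (Units.mk0 (ε : 𝕜) hε0)
  · rw [hfactor]
    push_cast
    rw [schurComplement_smul N P Pᴴ (x : 𝕜) hε0 hD, norm_smul]
    calc _ ≤ ε ^ 2 * x ^ 2 * (2 * Γ) := by
          rw [← RCLike.ofReal_pow, ← RCLike.ofReal_pow, ← RCLike.ofReal_mul,
            RCLike.norm_of_nonneg (by positivity)]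
          gcongr
          exact norm_sub_smul_mul_mul_conjTranspose_le_two_mul hN hP hinv
      _ = 2 * Γ * ε ^ 2 * x ^ 2 := by ring

end Matrix

/-- Item (III) of Appendix A4: if `A` is Hermitian with simple eigenvalues
`0 < a₁ < ⋯ < a_s` and `M` is the Hermitian block matrix
`[[ε²x²N, ε²xP], [ε²xP*, εA + ε²Q]]` with `‖N‖, ‖Q‖, ‖P‖ ≤ Γ`, then for `ε` small and
`|x| ≤ 1` at least `r` eigenvalues of `M`, counted with multiplicity, lie in
`[−Cε²x², Cε²x²]`. -/
theorem block_matrix_small_eigenvalues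
    (r s : ℕ) (hr : 1 ≤ r) (hs : 1 ≤ s)
    (A : Matrix (Fin s) (Fin s) ℂ) (hA : A.IsHermitian)
    (a : Fin s → ℝ) (hmono : StrictMono a) (hpos : ∀ j, 0 < a j)
    (hroots : A.charpoly.roots = ∑ j, ({((a j : ℝ) : ℂ)} : Multiset ℂ))
    (Γ : ℝ) (hΓ : 0 < Γ) :
    ∃ C εbar : ℝ, 0 < C ∧ 0 < εbar ∧
      ∀ ε x : ℝ, ε ∈ Set.Ioo (0 : ℝ) εbar → |x| ≤ 1 →
      ∀ (N : Matrix (Fin r) (Fin r) ℂ) (Q : Matrix (Fin s) (Fin s) ℂ)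
        (P : Matrix (Fin r) (Fin s) ℂ),
        N.IsHermitian → Q.IsHermitian →
        matOpNorm N ≤ Γ → matOpNorm Q ≤ Γ → matOpNorm P ≤ Γ →
        ∀ hM : (Matrix.fromBlocks
            (((ε ^ 2 * x ^ 2 : ℝ) : ℂ) • N) (((ε ^ 2 * x : ℝ) : ℂ) • P)
            (((ε ^ 2 * x : ℝ) : ℂ) • P.conjTranspose)
            ((ε : ℂ) • A + ((ε ^ 2 : ℝ) : ℂ) • Q)).IsHermitian,
          r ≤ (Finset.univ.filter fun k : Fin r ⊕ Fin s =>
            -(C * ε ^ 2 * x ^ 2) ≤ hM.eigenvalues k ∧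
              hM.eigenvalues k ≤ C * ε ^ 2 * x ^ 2).card := by
  have hA0 : IsUnit A := isUnit_of_zero_notMem_roots_charpoly (by
    simpa [hroots, Multiset.mem_sum, eq_comm] using fun j => (hpos j).ne')
  obtain ⟨C, εbar, hC, hεbar, h⟩ := block_matrix_small_eigenvalues_general (m := Fin r) hA0 hΓ
  exact ⟨C, εbar, hC, hεbar, fun ε x hε _ N Q P _ _ hN hQ hP hM => by
    simpa using h ε x hε N Q P hN hQ hP hM⟩
end
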